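/- arXiv:1606.05103 — 2 statements merged into one kernel-verified Lean document; each statement's English description precedes it below -/
import Mathlib

section
/- (Remark 1: expansion of the Hamiltonian and of the reduced Hamiltonian for ε-scaled configurations.) Fix r₀ > 0, z₀ ∈ ℝ, n ≥ 1 and distinct points b₁,…,bₙ ∈ ℝ². For ε small set a_{i,ε} := (r₀ + r(bᵢ)/√|log ε|, z₀ + z(bᵢ)/√|log ε|) ∈ H, Γ_ε(r₀,n) := n r₀ ( π|log ε| + γ + π n log r₀ + π n(3 log 2 − 2) + π((n−1)/2) log|log ε| ), W_{ε,r₀}(b₁,…,bₙ) := π Σᵢ r(bᵢ) √|log ε| − π r₀ Σ_{i≠j} log|bᵢ−b_j|, P(a₁,…,aₙ) := π Σᵢ r(aᵢ)², and W(b₁,…,bₙ) := −Σ_{i≠j} log|bᵢ−b_j| − (1/(2r₀²)) Σᵢ r(bᵢ)². Then, as ε → 0: (i) H_ε(a_{1,ε},…,a_{n,ε}) − Γ_ε(r₀,n) − W_{ε,r₀}(b₁,…,bₙ) → 0; and (ii) ( H_ε − (|log ε|/(2r₀)) P )(a_{1,ε},…,a_{n,ε}) + (π/2) n r₀ |log ε|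 − Γ_ε(r₀,n) − π r₀ W(b₁,…,bₙ) → 0. -/
open MeasureTheory Filter Metric
open scoped Topology Real

noncomputable section

/-- Euclidean norm on `ℝ × ℝ`. -/
def nE (v : ℝ × ℝ) : ℝ := Real.sqrt (v.1 ^ 2 + v.2 ^ 2)

/-- Euclidean squared norm on `ℝ × ℝ`. -/
def sqE (v : ℝ × ℝ) : ℝ := v.1 ^ 2 + v.2 ^ 2

/-- Euclidean distance on `ℝ × ℝ`. -/
def dE (p q : ℝ × ℝ) : ℝ := nE (p - q)

/-- Euclidean open ball in `ℝ × ℝ`. -/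
def ballE (a : ℝ × ℝ) (r : ℝ) : Set (ℝ × ℝ) := {p | dE p a < r}

/-- The open half plane `H = {(r,z) : r > 0}`. -/
def Hp : Set (ℝ × ℝ) := {p | 0 < p.1}

/-- Partial derivative in the `r` direction, complex valued. -/
def pdR (u : ℝ × ℝ → ℂ) (p : ℝ × ℝ) : ℂ := fderiv ℝ u p (1, 0)
/-- Partial derivative in the `z` direction, complex valued. -/
def pdZ (u : ℝ × ℝ → ℂ) (p : ℝ × ℝ) : ℂ := fderiv ℝ u p (0, 1)
/-- Partial derivative in the `r` direction, real valued. -/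
def pdRr (f : ℝ × ℝ → ℝ) (p : ℝ × ℝ) : ℝ := fderiv ℝ f p (1, 0)
/-- Partial derivative in the `z` direction, real valued. -/
def pdZr (f : ℝ × ℝ → ℝ) (p : ℝ × ℝ) : ℝ := fderiv ℝ f p (0, 1)

/-- Gradient of a real function on `ℝ × ℝ`. -/
def gradR (f : ℝ × ℝ → ℝ) (p : ℝ × ℝ) : ℝ × ℝ := (pdRr f p, pdZr f p)

/-- `y × w = Re (i y conj w)`. -/
def crossC (y w : ℂ) : ℝ := (Complex.I * y * (starRingEnd ℂ) w).re

/-- Jacobian `Ju = ∂_r u × ∂_z u`. -/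
def Jac (u : ℝ × ℝ → ℂ) (p : ℝ × ℝ) : ℝ := crossC (pdR u p) (pdZ u p)

/-- Ginzburg–Landau energy density. -/
def eGL (ε : ℝ) (u : ℝ × ℝ → ℂ) (p : ℝ × ℝ) : ℝ :=
  (‖pdR u p‖ ^ 2 + ‖pdZ u p‖ ^ 2) / 2 + (1 - ‖u p‖ ^ 2) ^ 2 / (4 * ε ^ 2)

/-- Weighted Ginzburg–Landau energy on the half plane. -/
def Ew (ε : ℝ) (u : ℝ × ℝ → ℂ) : ℝ := ∫ p in Hp, eGL ε u p * p.1

/-- `r` component of the current `j(u) = Im (conj u ∇u)`. -/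
def jr (u : ℝ × ℝ → ℂ) (p : ℝ × ℝ) : ℝ := ((starRingEnd ℂ) (u p) * pdR u p).im
/-- `z` component of the current `j(u)`. -/
def jz (u : ℝ × ℝ → ℂ) (p : ℝ × ℝ) : ℝ := ((starRingEnd ℂ) (u p) * pdZ u p).im

/-- The loop-current vector potential `A_a`. -/
def Avec (a : ℝ × ℝ) (p : ℝ × ℝ) : ℝ :=
  (a.1 / 2) * ∫ t in (0:ℝ)..(2 * π),
    Real.cos t / Real.sqrt (a.1 ^ 2 + p.1 ^ 2 + (p.2 - a.2) ^ 2 - 2 * a.1 * p.1 * Real.cos t)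

/-- Ginzburg–Landau energy on the unit disc. -/
def eDisc (ε : ℝ) (v : ℝ × ℝ → ℂ) : ℝ :=
  ∫ p in ballE ((0:ℝ), (0:ℝ)) 1,
    ((‖pdR v p‖ ^ 2 + ‖pdZ v p‖ ^ 2) / 2 + (1 - ‖v p‖ ^ 2) ^ 2 / (4 * ε ^ 2))

/-- The constant `γ` of Bethuel–Brezis–Hélein. -/
def glGamma : ℝ :=
  Filter.liminf (fun ε : ℝ =>
      sInf {E : ℝ | ∃ v : ℝ × ℝ → ℂ,
        DifferentiableOn ℝ v (ballE ((0:ℝ), (0:ℝ)) 1) ∧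
        IntegrableOn (fun p => (‖pdR v p‖ ^ 2 + ‖pdZ v p‖ ^ 2) / 2
            + (1 - ‖v p‖ ^ 2) ^ 2 / (4 * ε ^ 2)) (ballE ((0:ℝ), (0:ℝ)) 1) ∧
        (∀ p : ℝ × ℝ, nE p = 1 → v p = (p.1 : ℂ) + (p.2 : ℂ) * Complex.I) ∧
        E = eDisc ε v}
      - π * |Real.log ε|) (𝓝[>] (0:ℝ))

/-- The Hamiltonian `H_ε`. -/
def Hfun (ε : ℝ) {n : ℕ} (a : Fin n → ℝ × ℝ) : ℝ :=
  ∑ i, (a i).1 * (π * Real.log ((a i).1 / ε) + glGamma + π * (3 * Real.log 2 - 2)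
      + π * ∑ j ∈ Finset.univ.erase i, Avec (a j) (a i))

/-- `ρ_a = (1/4) min (min_{i≠j} |aᵢ-aⱼ|, minᵢ r(aᵢ))`. -/
def rhoConf {n : ℕ} (a : Fin n → ℝ × ℝ) : ℝ :=
  (1 / 4) * sInf ({d | ∃ i j : Fin n, i ≠ j ∧ d = dE (a i) (a j)} ∪ {d | ∃ i, d = (a i).1})

/-- Positive part. -/
def posPart' (x : ℝ) : ℝ := max x 0

/-- Admissible test functions for the `Ẇ^{-1,1}(Ω)` norm. -/
def W11Adm (Ω : Set (ℝ × ℝ)) (φ : ℝ × ℝ → ℝ) : Prop :=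
  (∀ p q : ℝ × ℝ, |φ p - φ q| ≤ dE p q) ∧ HasCompactSupport φ ∧ ∀ p ∉ Ω, φ p = 0

/-- `‖Ju − π Σᵢ δ_{aᵢ}‖_{Ẇ^{-1,1}(Ω)}`. -/
def w11JacDiff (Ω : Set (ℝ × ℝ)) (u : ℝ × ℝ → ℂ) {n : ℕ} (a : Fin n → ℝ × ℝ) : ℝ :=
  sSup {x | ∃ φ, W11Adm Ω φ ∧ x = (∫ p in Ω, Jac u p * φ p) - π * ∑ i, φ (a i)}

/-- `Ẇ^{-1,1}(Ω)` norm of a locally integrable function. -/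
def w11Fn (Ω : Set (ℝ × ℝ)) (f : ℝ × ℝ → ℝ) : ℝ :=
  sSup {x | ∃ φ, W11Adm Ω φ ∧ x = ∫ p in Ω, f p * φ p}

/-- `div (r ∇ v)`. -/
def divRGrad (v : ℝ × ℝ → ℂ) (p : ℝ × ℝ) : ℂ :=
  fderiv ℝ (fun q => (q.1 : ℂ) * pdR v q) p (1, 0)
    + fderiv ℝ (fun q => (q.1 : ℂ) * pdZ v q) p (0, 1)

/-- A finite-energy solution of the cylindrical Gross–Pitaevskii equation `(GP)^c_ε`. -/
structure IsGPSolution (ε : ℝ) (u : ℝ → ℝ × ℝ → ℂ) : Prop where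
  smooth : ContDiffOn ℝ (⊤ : ℕ∞) (fun q : (ℝ × ℝ) × ℝ => u q.2 q.1) (closure Hp ×ˢ (Set.univ : Set ℝ))
  eqn : ∀ t : ℝ, ∀ p ∈ Hp,
    Complex.I * (p.1 : ℂ) * deriv (fun τ => u τ p) t - divRGrad (u t) p
      = ((p.1 : ℂ) / (ε : ℂ) ^ 2) * u t p * (1 - (‖u t p‖ : ℂ) ^ 2)
  bdry : ∀ t : ℝ, ∀ p : ℝ × ℝ, p.1 = 0 → pdR (u t) p = 0
  energyFin : ∀ t : ℝ, IntegrableOn (fun p => eGL ε (u t) p * p.1) Hp volume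
  energyConst : ∀ t : ℝ, Ew ε (u t) = Ew ε (u 0)

/-- `∇_{aᵢ} H_ε`. -/
def gradHi (ε : ℝ) {n : ℕ} (a : Fin n → ℝ × ℝ) (i : Fin n) : ℝ × ℝ :=
  gradR (fun x => Hfun ε (Function.update a i x)) (a i)

/-- The matrix `𝕁` with rows `(0, -1/r)` and `(1/r, 0)`. -/
def Jmat (r : ℝ) (v : ℝ × ℝ) : ℝ × ℝ := (-v.2 / r, v.1 / r)

/-- The system `(LF)_ε`. -/
def IsLFepsSol (ε : ℝ) {n : ℕ} (a : ℝ → Fin n → ℝ × ℝ) (I : Set ℝ) : Prop :=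
  ∀ i : Fin n, ∀ s ∈ I,
    HasDerivWithinAt (fun τ => a τ i)
      ((1 / (π * |Real.log ε|)) • Jmat ((a s i).1) (gradHi ε (a s) i)) I s

/-- `(x, y)^⊥ = (-y, x)`. -/
def perp2 (v : ℝ × ℝ) : ℝ × ℝ := (-v.2, v.1)

/-- The limiting leapfrogging system `(LF)`. -/
def IsLFSol (r₀ : ℝ) {n : ℕ} (b : ℝ → Fin n → ℝ × ℝ) (I : Set ℝ) : Prop :=
  ∀ i : Fin n, ∀ s ∈ I,
    HasDerivWithinAt (fun τ => b τ i)
      ((∑ j ∈ Finset.univ.erase i, (sqE (b s i - b s j))⁻¹ • perp2 (b s i - b s j))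
        - ((b s i).1 / r₀ ^ 2) • ((0:ℝ), (1:ℝ))) I s

/-- The `ε`-scaled configuration of points around `(r₀, z₀)`. -/
def aScaled (r₀ z₀ : ℝ) {n : ℕ} (b : Fin n → ℝ × ℝ) (ε : ℝ) (i : Fin n) : ℝ × ℝ :=
  (r₀ + (b i).1 / Real.sqrt |Real.log ε|, z₀ + (b i).2 / Real.sqrt |Real.log ε|)

/-- `Ψ*_ξ = Σᵢ A_{ξᵢ}`. -/
def PsiStar {n : ℕ} (ξ : Fin n → ℝ × ℝ) (p : ℝ × ℝ) : ℝ := ∑ i, Avec (ξ i) p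

/-- `r Ψ*_ξ`. -/
def rPsiStar {n : ℕ} (ξ : Fin n → ℝ × ℝ) (p : ℝ × ℝ) : ℝ := p.1 * PsiStar ξ p

/-- `r` component of `j*_ξ = -(1/r) ∇^⊥ (r Ψ*_ξ)`. -/
def jrStar {n : ℕ} (ξ : Fin n → ℝ × ℝ) (p : ℝ × ℝ) : ℝ := (1 / p.1) * pdZr (rPsiStar ξ) p
/-- `z` component of `j*_ξ`. -/
def jzStar {n : ℕ} (ξ : Fin n → ℝ × ℝ) (p : ℝ × ℝ) : ℝ := -(1 / p.1) * pdRr (rPsiStar ξ) p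

/-- Energy density of the modulus `e_ε(|u|)`. -/
def eGLmod (ε : ℝ) (u : ℝ × ℝ → ℂ) (p : ℝ × ℝ) : ℝ :=
  ((pdRr (fun q => ‖u q‖) p) ^ 2 + (pdZr (fun q => ‖u q‖) p) ^ 2) / 2
    + (1 - ‖u p‖ ^ 2) ^ 2 / (4 * ε ^ 2)

/-- The core component `𝒞ᵢ`. -/
def coreComp {n : ℕ} (ξ : Fin n → ℝ × ℝ) (rξ : ℝ) (i : Fin n) : Set (ℝ × ℝ) :=
  insert (ξ i)
    (connectedComponentIn {p : ℝ × ℝ | rPsiStar ξ (ξ i + (rξ, 0)) ≤ rPsiStar ξ p}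
      (ξ i + (rξ, 0)))

-- `r Ψ^♮_ξ`, the truncated stream function.
open Classical in
def rPsiNat {n : ℕ} (ξ : Fin n → ℝ × ℝ) (rξ : ℝ) (p : ℝ × ℝ) : ℝ :=
  if h : ∃ i, p ∈ coreComp ξ rξ i then rPsiStar ξ (ξ h.choose + (rξ, 0))
  else rPsiStar ξ p

/-- `r` component of the truncated current `j^♮(u*_ξ)`. -/
def jrNat {n : ℕ} (ξ : Fin n → ℝ × ℝ) (rξ : ℝ) (p : ℝ × ℝ) : ℝ :=
  (1 / p.1) * pdZr (rPsiNat ξ rξ) p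
/-- `z` component of the truncated current `j^♮(u*_ξ)`. -/
def jzNat {n : ℕ} (ξ : Fin n → ℝ × ℝ) (rξ : ℝ) (p : ℝ × ℝ) : ℝ :=
  -(1 / p.1) * pdRr (rPsiNat ξ rξ) p
/-- The truncated current `j^♮(u*_ξ)`. -/
def jNat {n : ℕ} (ξ : Fin n → ℝ × ℝ) (rξ : ℝ) (p : ℝ × ℝ) : ℝ × ℝ :=
  (jrNat ξ rξ p, jzNat ξ rξ p)

/-- Second partial derivatives. -/
def pd2RRr (f : ℝ × ℝ → ℝ) (p : ℝ × ℝ) : ℝ := fderiv ℝ (pdRr f) p (1, 0)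
def pd2RZr (f : ℝ × ℝ → ℝ) (p : ℝ × ℝ) : ℝ := fderiv ℝ (pdZr f) p (1, 0)
def pd2ZZr (f : ℝ × ℝ → ℝ) (p : ℝ × ℝ) : ℝ := fderiv ℝ (pdZr f) p (0, 1)

/-- The functional `F(X, φ)` for a vector field `X`. -/
def Ffun (X : ℝ × ℝ → ℝ × ℝ) (φ : ℝ × ℝ → ℝ) : ℝ :=
  ∫ p in Hp,
    (-(1 / p.1) * (X p).1 * (X p).2 * pdRr φ p + (1 / p.1) * (X p).1 ^ 2 * pdZr φ p
      + (X p).1 * (X p).2 * pd2RRr φ p + (X p).2 ^ 2 * pd2RZr φ p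
      - (X p).1 ^ 2 * pd2RZr φ p - (X p).1 * (X p).2 * pd2ZZr φ p)

/-- `Ω₀ = {r ≥ r₀/4}`. -/
def Omega0 (r₀ : ℝ) : Set (ℝ × ℝ) := {p | r₀ / 4 ≤ p.1}

/-- Excess energy `Σ_a = [E^w_ε(u) − H_ε(a)]⁺`. -/
def SigA (ε : ℝ) {n : ℕ} (u : ℝ × ℝ → ℂ) (a : Fin n → ℝ × ℝ) : ℝ :=
  posPart' (Ew ε u - Hfun ε a)

/-- Localization scale `r_a`. -/
def rA (r₀ : ℝ) {n : ℕ} (u : ℝ × ℝ → ℂ) (a : Fin n → ℝ × ℝ) : ℝ :=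
  w11JacDiff (Omega0 r₀) u a

/-- `Σ^r_a = Σ_a + r_a |log ε|`. -/
def SigRA (ε r₀ : ℝ) {n : ℕ} (u : ℝ × ℝ → ℂ) (a : Fin n → ℝ × ℝ) : ℝ :=
  SigA ε u a + rA r₀ u a * |Real.log ε|

/-- Hypothesis `(H₁)`. -/
def HypH1 (ε K₁ r₀ : ℝ) {n : ℕ} (a : Fin n → ℝ × ℝ) : Prop :=
  (∀ i j : Fin n, i ≠ j → 8 / |Real.log ε| ≤ dE (a i) (a j) ∧ dE (a i) (a j) ≤ K₁) ∧
  ∀ i, r₀ / 2 ≤ (a i).1 ∧ (a i).1 ≤ 2 * r₀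

/-- Hypothesis `(H₀)`. -/
def HypH0 (ε K₀ r₀ : ℝ) {n : ℕ} (a : Fin n → ℝ × ℝ) : Prop :=
  (∀ i j : Fin n, i ≠ j →
    K₀⁻¹ / Real.sqrt |Real.log ε| ≤ dE (a i) (a j) ∧
    dE (a i) (a j) ≤ K₀ / Real.sqrt |Real.log ε|) ∧
  (∀ i, r₀ / 2 ≤ (a i).1 ∧ (a i).1 ≤ 2 * r₀) ∧
  (∀ i, |(a i).2| ≤ K₀)

/-- The conclusions of Proposition 2.1 for the points `ξ`. -/
def Concl21 (ε C₁ r₀ : ℝ) {n : ℕ} (u : ℝ × ℝ → ℂ) (a ξ : Fin n → ℝ × ℝ) : Prop :=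
  (∀ i, ξ i ∈ Hp) ∧
  w11JacDiff {p : ℝ × ℝ | C₁ * (SigA ε u ξ + 1) / |Real.log ε| ≤ p.1} u ξ
      ≤ C₁ * ε * |Real.log ε| ^ C₁ * Real.exp (C₁ * SigRA ε r₀ u a) ∧
  (∫ p in Hp \ ⋃ i, ballE (ξ i) (ε ^ ((2:ℝ)/3)),
      (eGLmod ε u p
        + ((jr u p / ‖u p‖ - jrStar ξ p) ^ 2 + (jz u p / ‖u p‖ - jzStar ξ p) ^ 2)) * p.1)
      ≤ C₁ * (SigA ε u ξ
        + ε ^ ((1:ℝ)/3) * |Real.log ε| ^ C₁ * Real.exp (C₁ * SigRA ε r₀ u a)) ∧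
  SigA ε u ξ ≤ SigA ε u a + C₁ * rA r₀ u a * |Real.log ε|
      + C₁ * ε * |Real.log ε| ^ C₁ * Real.exp (C₁ * SigRA ε r₀ u a)

/-- A smooth cut-off at scale `Rε`. -/
def IsCutoff (Cχ Rε : ℝ) (χ : ℝ × ℝ → ℝ) : Prop :=
  ContDiff ℝ (⊤ : ℕ∞) χ ∧ (∀ p, χ p ∈ Set.Icc (0:ℝ) 1) ∧
  (∀ p : ℝ × ℝ, p ∉ (Set.Icc (0:ℝ) (2 * Rε)) ×ˢ (Set.Icc (-(2 * Rε)) (2 * Rε)) → χ p = 0) ∧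
  HasCompactSupport χ ∧
  (∀ p ∈ (Set.Icc (0:ℝ) Rε) ×ˢ (Set.Icc (-Rε) Rε), χ p = 1) ∧
  (∀ p, nE (gradR χ p) ≤ Cχ / Rε)

/-- Localized momentum `P_ε(u)`. -/
def Peps (χ : ℝ × ℝ → ℝ) (u : ℝ × ℝ → ℂ) : ℝ := ∫ p in Hp, Jac u p * p.1 ^ 2 * χ p

/-- The setting of Theorem 1.2 : a solution of `(LF)_ε` on `[0,S₀]` with the
separation and radius bounds. -/
def LFSetting (ε K₀ r₀ S₀ : ℝ) {n : ℕ} (a : ℝ → Fin n → ℝ × ℝ) : Prop :=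
  IsLFepsSol ε a (Set.Icc 0 S₀) ∧
  ∀ s ∈ Set.Icc (0:ℝ) S₀,
    (∀ i j : Fin n, i ≠ j →
      K₀⁻¹ / Real.sqrt |Real.log ε| ≤ dE (a s i) (a s j) ∧
      dE (a s i) (a s j) ≤ K₀ / Real.sqrt |Real.log ε|) ∧
    ∀ i, r₀ / 2 ≤ (a s i).1 ∧ (a s i).1 ≤ 2 * r₀

/-- `r_a^s`. -/
def rasF (ε r₀ : ℝ) {n : ℕ} (u : ℝ → ℝ × ℝ → ℂ) (a : ℝ → Fin n → ℝ × ℝ) (s : ℝ) : ℝ :=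
  rA r₀ (u (s / |Real.log ε|)) (a s)

/-- `ρ_min = K₀⁻¹/√|log ε|`. -/
def rhoMinF (ε K₀ : ℝ) : ℝ := K₀⁻¹ / Real.sqrt |Real.log ε|

/-- The stopping time `S_stop`. -/
def SstopF (ε K₀ r₀ S₀ : ℝ) {n : ℕ} (u : ℝ → ℝ × ℝ → ℂ) (a : ℝ → Fin n → ℝ × ℝ) : ℝ :=
  sSup {S | S ∈ Set.Icc (0:ℝ) S₀ ∧ ∀ s ∈ Set.Icc (0:ℝ) S, rasF ε r₀ u a s ≤ rhoMinF ε K₀ / 8}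

/-- `r_ξ^s`. -/
def rxiF (ε C₁ r₀ : ℝ) {n : ℕ} (u : ℝ → ℝ × ℝ → ℂ) (a : ℝ → Fin n → ℝ × ℝ) (s : ℝ) : ℝ :=
  C₁ * ε * |Real.log ε| ^ C₁ *
    Real.exp (C₁ * (SigA ε (u 0) (a 0) + rasF ε r₀ u a s * |Real.log ε|))

/-- The radial Ginzburg–Landau vortex profile. -/
def IsProfile (f : ℝ → ℝ) : Prop :=
  f 0 = 0 ∧ Filter.Tendsto f Filter.atTop (𝓝 1) ∧ (∀ ρ : ℝ, f ρ ∈ Set.Icc (0:ℝ) 1) ∧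
  ∃ f' f'' : ℝ → ℝ, ∀ ρ : ℝ, 0 < ρ →
    HasDerivAt f (f' ρ) ρ ∧ HasDerivAt f' (f'' ρ) ρ ∧
    f'' ρ + f' ρ / ρ - f ρ / ρ ^ 2 + f ρ * (1 - f ρ ^ 2) = 0

/-- The singular unimodular vortex-ring map associated to a point `a ∈ H`. -/
def IsSingularRing (a : ℝ × ℝ) (u : ℝ × ℝ → ℂ) : Prop :=
  ContDiffOn ℝ (⊤ : ℕ∞) u (Hp \ {a}) ∧ (∀ p ∈ Hp, ‖u p‖ = 1) ∧
  ∀ p ∈ Hp \ {a},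
    p.1 * jr u p = pdZr (fun q => q.1 * Avec a q) p ∧
    p.1 * jz u p = -pdRr (fun q => q.1 * Avec a q) p

/-- Standard basis of `ℝ × ℝ`. -/
def e2 (k : Fin 2) : ℝ × ℝ := if k = 0 then (1, 0) else (0, 1)
/-- Antisymmetric symbol. -/
def epsSym (i j : Fin 2) : ℝ := if i = 0 ∧ j = 1 then 1 else if i = 1 ∧ j = 0 then -1 else 0
/-- `(y, w) = Re (y conj w)`. -/
def rinnerC (y w : ℂ) : ℝ := (y * (starRingEnd ℂ) w).re
/-- `∂_k u`. -/
def pdC (k : Fin 2) (u : ℝ × ℝ → ℂ) (p : ℝ × ℝ) : ℂ := fderiv ℝ u p (e2 k)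
/-- `∂_{ik} φ`. -/
def pdr2 (i k : Fin 2) (φ : ℝ × ℝ → ℝ) (p : ℝ × ℝ) : ℝ :=
  fderiv ℝ (fun q => fderiv ℝ φ q (e2 k)) p (e2 i)

/-- The functional `F(∇v, φ)` of equation (2.8). -/
def FGPc (v : ℝ × ℝ → ℂ) (φ : ℝ × ℝ → ℝ) : ℝ :=
  -(∫ p in Hp, ∑ i : Fin 2, ∑ j : Fin 2, ∑ k : Fin 2,
      epsSym i j * ((if k = (0 : Fin 2) then 1 / p.1 else 0) * rinnerC (pdC j v p) (pdC k v p))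
        * fderiv ℝ φ p (e2 i))
  + ∫ p in Hp, ∑ i : Fin 2, ∑ j : Fin 2, ∑ k : Fin 2,
      epsSym i j * rinnerC (pdC j v p) (pdC k v p) * pdr2 i k φ p

/-!
The substitution `t = 2 s` turns `A_a(p)` into `√(r(a) / r(p))` times an elliptic integral in the
modulus `k = |a - p| / (2 √(r(a) r(p)))`, which behaves like `-log k + 2 log 2 - 2` as `k → 0`. The
prefactor differs from `1` by `O(|a - p|)`, which beats the logarithm, so
`A_a(p) + log |a - p| → log r₀ + 3 log 2 - 2` as `a` and `p` merge at radius `r₀`. In a scaled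
configuration `|aᵢ - aⱼ| = |bᵢ - bⱼ| / √|log ε|`, so each ordered pair contributes
`(π r₀ / 2) log |log ε| - π r₀ log |bᵢ - bⱼ|`, while the self-energies `π r(aᵢ) |log ε|` produce the
term of order `√|log ε|`. Subtracting `(|log ε| / (2 r₀)) P` cancels that term, and the square in
`P` leaves `-(π / (2 r₀)) ∑ r(bᵢ)²`.
-/

section RegularisedSingularIntegrals

lemma tendsto_integral_div_sqrt_sq_add_sq {α : Type*} [MeasurableSpace α] {μ : Measure α}
    [IsFiniteMeasure μ] {f g : α → ℝ} {C : ℝ} (hf : AEMeasurable f μ) (hg : AEMeasurable g μ)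
    (hfg : ∀ᵐ x ∂μ, |f x| ≤ C * |g x|) :
    Tendsto (fun k : ℝ ↦ ∫ x, f x / √(k ^ 2 + g x ^ 2) ∂μ) (𝓝 0) (𝓝 (∫ x, f x / |g x| ∂μ)) := by
  refine tendsto_integral_filter_of_dominated_convergence (fun _ ↦ |C|)
    (.of_forall fun k ↦ (hf.div (by fun_prop)).aestronglyMeasurable) (.of_forall fun k ↦ ?_)
    (integrable_const _) ?_
  · filter_upwards [hfg] with x hx
    have hle : |g x| ≤ √(k ^ 2 + g x ^ 2) := Real.abs_le_sqrt (by nlinarith [sq_nonneg k])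
    rw [Real.norm_eq_abs, abs_div, abs_of_nonneg (Real.sqrt_nonneg _)]
    refine div_le_of_le_mul₀ (Real.sqrt_nonneg _) (abs_nonneg C) (hx.trans ?_)
    gcongr
    exact le_abs_self C
  · filter_upwards [hfg] with x hx
    rcases eq_or_ne (g x) 0 with hgx | hgx
    · have hfx : f x = 0 := by simpa [hgx] using hx
      simp [hfx]
    · have hcont : ContinuousAt (fun k : ℝ ↦ f x / √(k ^ 2 + g x ^ 2)) 0 :=
        ContinuousAt.div (by fun_prop) (by fun_prop) (by positivity)
      simpa [Real.sqrt_sq_eq_abs] using hcont.tendsto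

lemma integral_deriv_div_sqrt_sq_add_sq {f f' : ℝ → ℝ} {a b k : ℝ} (hk : 0 < k)
    (hf : ∀ x ∈ Set.uIcc a b, HasDerivAt f (f' x) x) (hf' : ContinuousOn f' (Set.uIcc a b)) :
    ∫ x in a..b, f' x / √(k ^ 2 + f x ^ 2) = Real.arsinh (f b / k) - Real.arsinh (f a / k) := by
  have hderiv : ∀ x ∈ Set.uIcc a b,
      HasDerivAt (fun x ↦ Real.arsinh (f x / k)) (f' x / √(k ^ 2 + f x ^ 2)) x := by
    intro x hx
    refine ((hf x hx).div_const k).arsinh.congr_deriv ?_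
    have hsqrt : √(k ^ 2 + f x ^ 2) = k * √(1 + (f x / k) ^ 2) := by
      rw [show k ^ 2 + f x ^ 2 = k ^ 2 * (1 + (f x / k) ^ 2) by field_simp,
        Real.sqrt_mul (sq_nonneg k), Real.sqrt_sq hk.le]
    rw [hsqrt, smul_eq_mul]
    field_simp
  have hcont : ContinuousOn f (Set.uIcc a b) := fun x hx ↦ (hf x hx).continuousAt.continuousWithinAt
  exact intervalIntegral.integral_eq_sub_of_hasDerivAt hderiv
    (hf'.div (by fun_prop) fun x _ ↦ by positivity).intervalIntegrable

lemma tendsto_arsinh_sub_log_atTop :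
    Tendsto (fun x ↦ Real.arsinh x - Real.log x) atTop (𝓝 (Real.log 2)) := by
  have hlim : Tendsto (fun x : ℝ ↦ Real.log (1 + √(1 + x⁻¹ ^ 2))) atTop (𝓝 (Real.log 2)) := by
    have hcont : ContinuousAt (fun y : ℝ ↦ Real.log (1 + √(1 + y ^ 2))) 0 :=
      ContinuousAt.log (by fun_prop) (by positivity)
    simpa [Function.comp_def, one_add_one_eq_two] using hcont.tendsto.comp tendsto_inv_atTop_zero
  refine hlim.congr' ?_
  filter_upwards [eventually_gt_atTop 0] with x hx
  have hsqrt : √(1 + x ^ 2) = x * √(1 + x⁻¹ ^ 2) := by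
    rw [show 1 + x ^ 2 = x ^ 2 * (1 + x⁻¹ ^ 2) by field_simp; ring,
      Real.sqrt_mul (sq_nonneg x), Real.sqrt_sq hx.le]
  rw [Real.arsinh, hsqrt, ← mul_one_add, Real.log_mul hx.ne' (by positivity)]
  ring

lemma integral_eq_two_smul_integral_half_of_reflection {E : Type*} [NormedAddCommGroup E]
    [NormedSpace ℝ E] {f : ℝ → E} {c : ℝ} (hf : IntervalIntegrable f volume 0 c)
    (hsymm : ∀ x, f (c - x) = f x) :
    ∫ x in 0..c, f x = (2 : ℝ) • ∫ x in 0..(c / 2), f x := by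
  have hmid : c / 2 ∈ Set.uIcc 0 c := by
    rcases le_total 0 c with hc | hc
    · rw [Set.uIcc_of_le hc]; constructor <;> linarith
    · rw [Set.uIcc_of_ge hc]; constructor <;> linarith
  have hreflect : ∫ x in (c / 2)..c, f x = ∫ x in 0..(c / 2), f x := by
    rw [← intervalIntegral.integral_congr fun x _ ↦ hsymm x,
      intervalIntegral.integral_comp_sub_left, sub_self, sub_half]
  rw [← intervalIntegral.integral_add_adjacent_intervals
    (hf.mono_set (Set.uIcc_subset_uIcc_left hmid)) (hf.mono_set (Set.uIcc_subset_uIcc_right hmid)),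
    hreflect, two_smul]

end RegularisedSingularIntegrals

section LoopIntegral

/-- The elliptic integral governing the vector potential of a circular loop; `k` is the distance
to the loop, in units of twice the geometric mean of the two radii. -/
def loopIntegral (k : ℝ) : ℝ :=
  ∫ s in 0..(π / 2), Real.cos (2 * s) / √(k ^ 2 + Real.sin s ^ 2)

lemma abs_cos_two_mul_sub_cos_le {s : ℝ} (hs : s ∈ Set.Icc 0 (π / 2)) :
    |Real.cos (2 * s) - Real.cos s| ≤ 2 * |Real.sin s| := by
  have hsin : 0 ≤ Real.sin s := Real.sin_nonneg_of_mem_Icc ⟨hs.1, by linarith [hs.2, Real.pi_pos]⟩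
  have hcos : 0 ≤ Real.cos s := Real.cos_nonneg_of_mem_Icc ⟨by linarith [hs.1, Real.pi_pos], hs.2⟩
  have hsq := Real.sin_sq_add_cos_sq s
  rw [abs_of_nonneg hsin, Real.cos_two_mul, abs_le]
  constructor <;> nlinarith [Real.sin_le_one s, Real.cos_le_one s]

lemma cos_two_mul_sub_cos_div_sin {s : ℝ} (hs : Real.sin s ≠ 0) :
    (Real.cos (2 * s) - Real.cos s) / Real.sin s
      = Real.sin s / (1 + Real.cos s) - 2 * Real.sin s := by
  have hcos : 1 + Real.cos s ≠ 0 := fun h ↦ hs <| by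
    nlinarith [Real.sin_sq_add_cos_sq s, sq_nonneg (Real.sin s)]
  rw [Real.cos_two_mul]
  field_simp
  linear_combination (2 * Real.cos s + 1) * Real.sin_sq_add_cos_sq s

lemma integral_cos_two_mul_sub_cos_div_abs_sin :
    ∫ s in 0..(π / 2), (Real.cos (2 * s) - Real.cos s) / |Real.sin s| = Real.log 2 - 2 := by
  have hpos : ∀ s ∈ Set.uIcc 0 (π / 2), 0 < 1 + Real.cos s := by
    intro s hs
    rw [Set.uIcc_of_le (by positivity)] at hs
    have := Real.cos_nonneg_of_mem_Icc ⟨by linarith [hs.1, Real.pi_pos], hs.2⟩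
    positivity
  have hintegrand : ∫ s in 0..(π / 2), (Real.cos (2 * s) - Real.cos s) / |Real.sin s|
      = ∫ s in 0..(π / 2), (Real.sin s / (1 + Real.cos s) - 2 * Real.sin s) := by
    refine intervalIntegral.integral_congr_ae (.of_forall fun s hs ↦ ?_)
    rw [Set.uIoc_of_le (by positivity)] at hs
    have hsin := Real.sin_pos_of_pos_of_lt_pi hs.1 (by linarith [hs.2, Real.pi_pos])
    rw [abs_of_pos hsin, cos_two_mul_sub_cos_div_sin hsin.ne']
  have hderiv : ∀ s ∈ Set.uIcc 0 (π / 2),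
      HasDerivAt (fun s ↦ 2 * Real.cos s - Real.log (1 + Real.cos s))
        (Real.sin s / (1 + Real.cos s) - 2 * Real.sin s) s := fun s hs ↦
    (((Real.hasDerivAt_cos s).const_mul 2).sub
      (((Real.hasDerivAt_cos s).const_add 1).log (hpos s hs).ne')).congr_deriv (by ring)
  have hcont : ContinuousOn (fun s ↦ Real.sin s / (1 + Real.cos s) - 2 * Real.sin s)
      (Set.uIcc 0 (π / 2)) :=
    ContinuousOn.sub (ContinuousOn.div (by fun_prop) (by fun_prop) fun s hs ↦ (hpos s hs).ne')
      (by fun_prop)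
  rw [hintegrand, intervalIntegral.integral_eq_sub_of_hasDerivAt hderiv hcont.intervalIntegrable]
  simp only [Real.cos_pi_div_two, Real.cos_zero, one_add_one_eq_two, add_zero, Real.log_one]
  ring

-- Subtracting `cos s` cancels the singularity, and its own contribution is an explicit `arsinh`.
lemma loopIntegral_eq_integral_add_arsinh {k : ℝ} (hk : 0 < k) :
    loopIntegral k = (∫ s in 0..(π / 2),
      (Real.cos (2 * s) - Real.cos s) / √(k ^ 2 + Real.sin s ^ 2)) + Real.arsinh k⁻¹ := by
  have hint {f : ℝ → ℝ} (hf : Continuous f) :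
      IntervalIntegrable (fun s ↦ f s / √(k ^ 2 + Real.sin s ^ 2)) volume 0 (π / 2) :=
    (hf.div (by fun_prop) fun s ↦ by positivity).intervalIntegrable _ _
  have harsinh : ∫ s in 0..(π / 2), Real.cos s / √(k ^ 2 + Real.sin s ^ 2) = Real.arsinh k⁻¹ := by
    simpa using integral_deriv_div_sqrt_sq_add_sq hk (a := 0) (b := π / 2)
      (fun s _ ↦ Real.hasDerivAt_sin s) Real.continuous_cos.continuousOn
  rw [← harsinh, ← intervalIntegral.integral_add (hint (by fun_prop)) (hint (by fun_prop))]
  simp only [loopIntegral, sub_div, sub_add_cancel]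

lemma tendsto_loopIntegral_add_log :
    Tendsto (fun k ↦ loopIntegral k + Real.log k) (𝓝[>] 0) (𝓝 (2 * Real.log 2 - 2)) := by
  have hregular : Tendsto (fun k : ℝ ↦ ∫ s in 0..(π / 2),
      (Real.cos (2 * s) - Real.cos s) / √(k ^ 2 + Real.sin s ^ 2)) (𝓝 0)
      (𝓝 (Real.log 2 - 2)) := by
    rw [← integral_cos_two_mul_sub_cos_div_abs_sin]
    simp only [intervalIntegral.integral_of_le (show 0 ≤ π / 2 by positivity)]
    refine tendsto_integral_div_sqrt_sq_add_sq (C := 2) (by fun_prop) (by fun_prop)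
      (ae_restrict_of_forall_mem measurableSet_Ioc fun s hs ↦ ?_)
    exact abs_cos_two_mul_sub_cos_le (Set.Ioc_subset_Icc_self hs)
  have hlim := (hregular.mono_left nhdsWithin_le_nhds).add
    (tendsto_arsinh_sub_log_atTop.comp tendsto_inv_nhdsGT_zero)
  rw [show Real.log 2 - 2 + Real.log 2 = 2 * Real.log 2 - 2 by ring] at hlim
  refine hlim.congr' ?_
  filter_upwards [self_mem_nhdsWithin] with k hk
  rw [loopIntegral_eq_integral_add_arsinh hk, Function.comp_apply, Real.log_inv]
  ring

end LoopIntegral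

section VectorPotential

lemma dE_eq_dist (p q : ℝ × ℝ) : dE p q = dist (WithLp.toLp 2 p) (WithLp.toLp 2 q) := by
  simp [dE, nE, WithLp.prod_dist_eq_of_L2, Real.dist_eq]

lemma dE_comm (p q : ℝ × ℝ) : dE p q = dE q p := by
  simp only [dE_eq_dist, dist_comm]

lemma dE_pos {p q : ℝ × ℝ} : 0 < dE p q ↔ p ≠ q := by
  rw [dE_eq_dist, dist_pos, (WithLp.toLp_injective 2).ne_iff]

lemma dE_sq (p q : ℝ × ℝ) : dE p q ^ 2 = (p.1 - q.1) ^ 2 + (p.2 - q.2) ^ 2 :=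
  Real.sq_sqrt (by positivity)

lemma abs_fst_sub_fst_le_dE (p q : ℝ × ℝ) : |p.1 - q.1| ≤ dE p q :=
  Real.abs_le_sqrt (le_add_of_nonneg_right (sq_nonneg _))

lemma continuous_dE : Continuous fun q : (ℝ × ℝ) × (ℝ × ℝ) ↦ dE q.1 q.2 := by
  unfold dE nE
  fun_prop

lemma Avec_eq_integral {a p : ℝ × ℝ} (ha : 0 ≤ a.1 * p.1) (hap : a ≠ p) :
    Avec a p = 2 * a.1 * ∫ s in 0..(π / 2),
      Real.cos (2 * s) / √(dE a p ^ 2 + 4 * (a.1 * p.1) * Real.sin s ^ 2) := by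
  have hd : 0 < dE a p := dE_pos.2 hap
  set f : ℝ → ℝ := fun t ↦ Real.cos t / √(dE a p ^ 2 + 2 * (a.1 * p.1) * (1 - Real.cos t)) with hf
  have hradicand (t : ℝ) : a.1 ^ 2 + p.1 ^ 2 + (p.2 - a.2) ^ 2 - 2 * a.1 * p.1 * Real.cos t
      = dE a p ^ 2 + 2 * (a.1 * p.1) * (1 - Real.cos t) := by
    rw [dE_sq]
    ring
  have hcont : Continuous f := by
    refine Real.continuous_cos.div (by fun_prop) fun t ↦ ?_
    have : 0 ≤ 1 - Real.cos t := sub_nonneg.2 (Real.cos_le_one t)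
    positivity
  have hhalf : ∫ t in 0..(2 * π), f t = 2 * ∫ t in 0..π, f t := by
    rw [integral_eq_two_smul_integral_half_of_reflection (hcont.intervalIntegrable _ _)
      fun t ↦ by simp only [hf, Real.cos_two_pi_sub], mul_div_cancel_left₀ π two_ne_zero,
      smul_eq_mul]
  have hdouble : ∫ t in 0..π, f t = 2 * ∫ s in 0..(π / 2), f (2 * s) := by
    rw [intervalIntegral.mul_integral_comp_mul_left, mul_zero, mul_div_cancel₀ π two_ne_zero]
  have hsubst (s : ℝ) : f (2 * s)
      = Real.cos (2 * s) / √(dE a p ^ 2 + 4 * (a.1 * p.1) * Real.sin s ^ 2) := by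
    simp only [hf, Real.sin_sq_eq_half_sub]
    ring_nf
  simp only [Avec, hradicand, ← hf, hhalf, hdouble, hsubst]
  ring

lemma Avec_eq_sqrt_mul_loopIntegral {a p : ℝ × ℝ} (ha : a ∈ Hp) (hp : p ∈ Hp) (hap : a ≠ p) :
    Avec a p = √(a.1 / p.1) * loopIntegral (dE a p / (2 * √(a.1 * p.1))) := by
  change 0 < a.1 at ha
  change 0 < p.1 at hp
  set m := √(a.1 * p.1) with hm
  have hm0 : 0 < m := by positivity
  have hratio : √(a.1 / p.1) = a.1 / m := by
    rw [hm, Real.sqrt_div ha.le, Real.sqrt_mul ha.le, div_mul_eq_div_div, Real.div_sqrt]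
  have hradicand (s : ℝ) : √(dE a p ^ 2 + 4 * (a.1 * p.1) * Real.sin s ^ 2)
      = 2 * m * √((dE a p / (2 * m)) ^ 2 + Real.sin s ^ 2) := by
    rw [← Real.sq_sqrt (mul_pos ha hp).le, ← hm,
      ← Real.sqrt_sq (mul_pos two_pos hm0).le, ← Real.sqrt_mul (sq_nonneg _),
      Real.sqrt_sq (mul_pos two_pos hm0).le]
    congr 1
    field_simp
    ring
  simp only [Avec_eq_integral (mul_pos ha hp).le hap, hradicand, loopIntegral, hratio,
    div_mul_eq_div_div_swap, intervalIntegral.integral_div]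
  field_simp

lemma tendsto_sqrt_fst_div_fst_sub_one_mul_log_dE {x : ℝ × ℝ} (hx : x ∈ Hp) :
    Tendsto (fun q : (ℝ × ℝ) × (ℝ × ℝ) ↦ (√(q.1.1 / q.2.1) - 1) * Real.log (dE q.1 q.2))
      (𝓝 (x, x)) (𝓝 0) := by
  have hx1 : x.1 ≠ 0 := ne_of_gt hx
  have hdiff : (fun q : (ℝ × ℝ) × (ℝ × ℝ) ↦ q.1.1 - q.2.1) =O[𝓝 (x, x)] fun q ↦ dE q.1 q.2 :=
    .of_norm_le fun q ↦ abs_fst_sub_fst_le_dE q.1 q.2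
  have hfactor : ContinuousAt (fun q : (ℝ × ℝ) × (ℝ × ℝ) ↦
      (q.2.1 * (√(q.1.1 / q.2.1) + 1))⁻¹) (x, x) := by
    refine ContinuousAt.inv₀ (by fun_prop (disch := assumption)) ?_
    positivity
  have hsqrt : (fun q : (ℝ × ℝ) × (ℝ × ℝ) ↦ √(q.1.1 / q.2.1) - 1)
      =O[𝓝 (x, x)] fun q ↦ dE q.1 q.2 := by
    refine ((hfactor.isBigO_one ℝ).mul hdiff).congr' ?_ (.of_forall fun q ↦ one_mul _)
    have hpos : ∀ᶠ q : (ℝ × ℝ) × (ℝ × ℝ) in 𝓝 (x, x), 0 < q.1.1 ∧ 0 < q.2.1 :=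
      (continuousAt_fst.fst.eventually (lt_mem_nhds hx)).and
        (continuousAt_snd.fst.eventually (lt_mem_nhds hx))
    filter_upwards [hpos] with q ⟨h₁, h₂⟩
    have hsq : √(q.1.1 / q.2.1) ^ 2 = q.1.1 / q.2.1 := Real.sq_sqrt (by positivity)
    rw [inv_mul_eq_iff_eq_mul₀ (by positivity)]
    field_simp at hsq
    linear_combination -hsq
  have hdlog : Tendsto (fun q : (ℝ × ℝ) × (ℝ × ℝ) ↦ dE q.1 q.2 * Real.log (dE q.1 q.2))
      (𝓝 (x, x)) (𝓝 0) := by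
    simpa [dE_eq_dist, Function.comp_def] using
      (Real.continuous_mul_log.comp continuous_dE).tendsto (x, x)
  exact (hsqrt.mul (Asymptotics.isBigO_refl _ _)).trans_tendsto hdlog

lemma tendsto_Avec_add_log_dE {x : ℝ × ℝ} (hx : x ∈ Hp) :
    Tendsto (fun q : (ℝ × ℝ) × (ℝ × ℝ) ↦ Avec q.1 q.2 + Real.log (dE q.1 q.2))
      (𝓝[(Set.diagonal (ℝ × ℝ))ᶜ] (x, x)) (𝓝 (Real.log x.1 + (3 * Real.log 2 - 2))) := by
  have hx0 : 0 < x.1 := hx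
  set l := 𝓝[(Set.diagonal (ℝ × ℝ))ᶜ] (x, x)
  have hle : l ≤ 𝓝 (x, x) := nhdsWithin_le_nhds
  have hfst : Tendsto (fun q : (ℝ × ℝ) × (ℝ × ℝ) ↦ q.1.1) l (𝓝 x.1) :=
    continuousAt_fst.fst.tendsto.mono_left hle
  have hsnd : Tendsto (fun q : (ℝ × ℝ) × (ℝ × ℝ) ↦ q.2.1) l (𝓝 x.1) :=
    continuousAt_snd.fst.tendsto.mono_left hle
  have hpos : ∀ᶠ q in l, 0 < q.1.1 ∧ 0 < q.2.1 ∧ q.1 ≠ q.2 := by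
    filter_upwards [hfst.eventually (lt_mem_nhds hx0), hsnd.eventually (lt_mem_nhds hx0),
      self_mem_nhdsWithin] with q h₁ h₂ hne using ⟨h₁, h₂, hne⟩
  have hratio : Tendsto (fun q ↦ √(q.1.1 / q.2.1)) l (𝓝 1) := by
    simpa [hx0.ne'] using (hfst.div hsnd hx0.ne').sqrt
  have hscale : Tendsto (fun q ↦ 2 * √(q.1.1 * q.2.1)) l (𝓝 (2 * x.1)) := by
    simpa [hx0.le] using (hfst.mul hsnd).sqrt.const_mul 2
  have hmodulus : Tendsto (fun q ↦ dE q.1 q.2 / (2 * √(q.1.1 * q.2.1))) l (𝓝[>] 0) := by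
    refine tendsto_nhdsWithin_iff.2 ⟨?_, ?_⟩
    · have hdE : Tendsto (fun q ↦ dE q.1 q.2) l (𝓝 0) := by
        simpa [dE_eq_dist] using (continuous_dE.tendsto (x, x)).mono_left hle
      simpa [Pi.div_def] using hdE.div hscale (by positivity)
    · filter_upwards [hpos] with q ⟨h₁, h₂, hne⟩
      have := dE_pos.2 hne
      exact Set.mem_Ioi.2 (by positivity)
  -- With `d = dE a p`, `ρ = r(a) / r(p)` and `k = d / (2m)`, `Avec a p + log d` equals
  -- `√ρ (loopIntegral k + log k) + √ρ log (2m) - (√ρ - 1) log d`.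
  have hlim := ((hratio.mul (tendsto_loopIntegral_add_log.comp hmodulus)).add
    (hratio.mul (hscale.log (by positivity)))).sub
    ((tendsto_sqrt_fst_div_fst_sub_one_mul_log_dE hx).mono_left hle)
  rw [Real.log_mul two_ne_zero hx0.ne', show 1 * (2 * Real.log 2 - 2)
    + 1 * (Real.log 2 + Real.log x.1) - 0 = Real.log x.1 + (3 * Real.log 2 - 2) by ring] at hlim
  refine hlim.congr' ?_
  filter_upwards [hpos] with q ⟨h₁, h₂, hne⟩
  rw [Function.comp_apply, Real.log_div (dE_pos.2 hne).ne' (by positivity),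
    Avec_eq_sqrt_mul_loopIntegral h₁ h₂ hne]
  ring

end VectorPotential


section ScaledConfigurations

/-- The interaction part `∑_{i ≠ j} r(aᵢ) A_{aⱼ}(aᵢ)` of the Hamiltonian, without its factor `π`. -/
def interactionEnergy {n : ℕ} (a : Fin n → ℝ × ℝ) : ℝ :=
  ∑ i, (a i).1 * ∑ j ∈ Finset.univ.erase i, Avec (a j) (a i)

lemma Hfun_eq_add_interactionEnergy {ε : ℝ} (hε : Real.log ε < 0) {n : ℕ} {a : Fin n → ℝ × ℝ}
    (ha : ∀ i, a i ∈ Hp) :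
    Hfun ε a = π * |Real.log ε| * ∑ i, (a i).1
      + ∑ i, (a i).1 * (π * Real.log (a i).1 + glGamma + π * (3 * Real.log 2 - 2))
      + π * interactionEnergy a := by
  have hε0 : ε ≠ 0 := fun h ↦ by simp [h] at hε
  simp only [Hfun, interactionEnergy, Finset.mul_sum, ← Finset.sum_add_distrib]
  refine Finset.sum_congr rfl fun i _ ↦ ?_
  rw [Real.log_div (ne_of_gt (ha i)) hε0, abs_of_neg hε, ← Finset.mul_sum, ← Finset.mul_sum,
    ← Finset.mul_sum]
  ring

lemma tendsto_sqrt_abs_log : Tendsto (fun ε : ℝ ↦ √|Real.log ε|) (𝓝[>] 0) atTop :=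
  Real.tendsto_sqrt_atTop.comp (tendsto_abs_atBot_atTop.comp Real.tendsto_log_nhdsGT_zero)

variable {n : ℕ} (r₀ z₀ : ℝ) (b : Fin n → ℝ × ℝ)

lemma tendsto_aScaled (i : Fin n) :
    Tendsto (fun ε ↦ aScaled r₀ z₀ b ε i) (𝓝[>] 0) (𝓝 (r₀, z₀)) := by
  have hshift (c d : ℝ) : Tendsto (fun ε : ℝ ↦ c + d / √|Real.log ε|) (𝓝[>] 0) (𝓝 c) := by
    simpa using (tendsto_sqrt_abs_log.const_div_atTop d).const_add c
  exact (hshift r₀ (b i).1).prodMk_nhds (hshift z₀ (b i).2)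

lemma dE_aScaled (ε : ℝ) (i j : Fin n) :
    dE (aScaled r₀ z₀ b ε i) (aScaled r₀ z₀ b ε j) = dE (b i) (b j) / √|Real.log ε| := by
  simp only [dE, nE, aScaled, Prod.fst_sub, Prod.snd_sub, add_sub_add_left_eq_sub, ← sub_div,
    div_pow, ← add_div]
  rw [Real.sqrt_div (by positivity), Real.sqrt_sq (Real.sqrt_nonneg _)]

lemma tendsto_fst_aScaled_mul_log_sub (i : Fin n) :
    Tendsto (fun ε ↦ (aScaled r₀ z₀ b ε i).1 * Real.log √|Real.log ε|
      - r₀ * Real.log √|Real.log ε|) (𝓝[>] 0) (𝓝 0) := by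
  have hlog : Tendsto (fun ε : ℝ ↦ Real.log √|Real.log ε| / √|Real.log ε|) (𝓝[>] 0) (𝓝 0) :=
    Real.isLittleO_log_id_atTop.tendsto_div_nhds_zero.comp tendsto_sqrt_abs_log
  simpa only [mul_zero] using (hlog.const_mul (b i).1).congr fun ε ↦ by
    simp only [aScaled]
    ring

lemma abs_log_mul_sum_fst_aScaled (ε : ℝ) :
    |Real.log ε| * ∑ i, (aScaled r₀ z₀ b ε i).1
      = n * r₀ * |Real.log ε| + √|Real.log ε| * ∑ i, (b i).1 := by
  simp only [aScaled, Finset.sum_add_distrib, Finset.sum_const, Finset.card_univ, Fintype.card_fin,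
    nsmul_eq_mul, ← Finset.sum_div]
  linear_combination (∑ i, (b i).1) * Real.div_sqrt (x := |Real.log ε|)

lemma abs_log_mul_sum_sq_fst_aScaled {ε : ℝ} (hε : Real.log ε ≠ 0) :
    |Real.log ε| * ∑ i, (aScaled r₀ z₀ b ε i).1 ^ 2
      = n * r₀ ^ 2 * |Real.log ε| + 2 * r₀ * √|Real.log ε| * ∑ i, (b i).1
        + ∑ i, (b i).1 ^ 2 := by
  have hs : √|Real.log ε| ≠ 0 := by positivity
  have hsq : √|Real.log ε| ^ 2 = |Real.log ε| := Real.sq_sqrt (abs_nonneg _)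
  simp only [aScaled, add_sq, Finset.sum_add_distrib, Finset.sum_const, Finset.card_univ,
    Fintype.card_fin, nsmul_eq_mul, ← Finset.mul_sum, ← Finset.sum_div, div_pow]
  generalize √|Real.log ε| = s at hs hsq ⊢
  rw [← hsq]
  field_simp

variable {r₀ b}

lemma tendsto_Avec_aScaled_sub_log (hr₀ : 0 < r₀) {i j : Fin n} (hij : b i ≠ b j) :
    Tendsto (fun ε ↦ Avec (aScaled r₀ z₀ b ε i) (aScaled r₀ z₀ b ε j) - Real.log √|Real.log ε|)
      (𝓝[>] 0) (𝓝 (Real.log r₀ + (3 * Real.log 2 - 2) - Real.log (dE (b i) (b j)))) := by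
  have hd : 0 < dE (b i) (b j) := dE_pos.2 hij
  have hs : ∀ᶠ ε : ℝ in 𝓝[>] 0, 0 < √|Real.log ε| := tendsto_sqrt_abs_log.eventually_gt_atTop 0
  have hpair : Tendsto (fun ε ↦ (aScaled r₀ z₀ b ε i, aScaled r₀ z₀ b ε j)) (𝓝[>] 0)
      (𝓝[(Set.diagonal (ℝ × ℝ))ᶜ] ((r₀, z₀), (r₀, z₀))) := by
    refine tendsto_nhdsWithin_iff.2
      ⟨(tendsto_aScaled r₀ z₀ b i).prodMk_nhds (tendsto_aScaled r₀ z₀ b j), ?_⟩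
    filter_upwards [hs] with ε hε
    exact dE_pos.1 (dE_aScaled r₀ z₀ b ε i j ▸ div_pos hd hε)
  refine (((tendsto_Avec_add_log_dE (x := (r₀, z₀)) hr₀).comp hpair).sub_const
    (Real.log (dE (b i) (b j)))).congr' ?_
  filter_upwards [hs] with ε hε
  rw [Function.comp_apply, dE_aScaled, Real.log_div hd.ne' hε.ne']
  ring

lemma tendsto_fst_mul_sum_Avec_aScaled_sub (hr₀ : 0 < r₀) (hb : Function.Injective b)
    (i : Fin n) :
    Tendsto (fun ε ↦ (aScaled r₀ z₀ b ε i).1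
        * ∑ j ∈ Finset.univ.erase i, Avec (aScaled r₀ z₀ b ε j) (aScaled r₀ z₀ b ε i)
        - (n - 1) * r₀ * Real.log √|Real.log ε|) (𝓝[>] 0)
      (𝓝 (r₀ * ((n - 1) * (Real.log r₀ + (3 * Real.log 2 - 2))
        - ∑ j ∈ Finset.univ.erase i, Real.log (dE (b i) (b j))))) := by
  have hcard : ((Finset.univ.erase i).card : ℝ) = n - 1 := by
    rw [Finset.cast_card_erase_of_mem (Finset.mem_univ i), Finset.card_univ, Fintype.card_fin]
  have hsum := tendsto_finsetSum (Finset.univ.erase i) fun j hj ↦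
    tendsto_Avec_aScaled_sub_log z₀ hr₀ (hb.ne (Finset.ne_of_mem_erase hj))
  simp only [Finset.sum_sub_distrib, Finset.sum_const, nsmul_eq_mul, hcard] at hsum
  have hlim := ((tendsto_aScaled r₀ z₀ b i).fst_nhds.mul hsum).add
    ((tendsto_fst_aScaled_mul_log_sub r₀ z₀ b i).const_mul (n - 1 : ℝ))
  simp only [mul_zero, add_zero, dE_comm _ (b i)] at hlim
  exact hlim.congr fun ε ↦ by ring

lemma tendsto_interactionEnergy_aScaled_sub (hr₀ : 0 < r₀) (hb : Function.Injective b) :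
    Tendsto (fun ε ↦ interactionEnergy (aScaled r₀ z₀ b ε)
        - n * (n - 1) * r₀ * Real.log √|Real.log ε|) (𝓝[>] 0)
      (𝓝 (r₀ * (n * (n - 1) * (Real.log r₀ + (3 * Real.log 2 - 2))
        - ∑ i, ∑ j ∈ Finset.univ.erase i, Real.log (dE (b i) (b j))))) := by
  have hsum := tendsto_finsetSum Finset.univ fun i _ ↦
    tendsto_fst_mul_sum_Avec_aScaled_sub z₀ hr₀ hb i
  rw [← Finset.mul_sum] at hsum
  simpa only [interactionEnergy, Finset.sum_sub_distrib, Finset.sum_const, Finset.card_univ,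
    Fintype.card_fin, nsmul_eq_mul, ← mul_assoc] using hsum

lemma tendsto_Hfun_aScaled_sub (hr₀ : 0 < r₀) (hb : Function.Injective b) :
    Tendsto (fun ε ↦ Hfun ε (aScaled r₀ z₀ b ε)
        - (π * n * r₀ * |Real.log ε| + π * √|Real.log ε| * ∑ i, (b i).1
          + π * n * (n - 1) * r₀ * Real.log √|Real.log ε|)) (𝓝[>] 0)
      (𝓝 (n * r₀ * (π * Real.log r₀ + glGamma + π * (3 * Real.log 2 - 2))
        + π * r₀ * (n * (n - 1) * (Real.log r₀ + (3 * Real.log 2 - 2))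
          - ∑ i, ∑ j ∈ Finset.univ.erase i, Real.log (dE (b i) (b j))))) := by
  have hfst (i : Fin n) : Tendsto (fun ε ↦ (aScaled r₀ z₀ b ε i).1) (𝓝[>] 0) (𝓝 r₀) :=
    (tendsto_aScaled r₀ z₀ b i).fst_nhds
  have hself := tendsto_finsetSum Finset.univ fun i _ ↦ (hfst i).mul
    (((((hfst i).log hr₀.ne').const_mul π).add_const glGamma).add_const
      (π * (3 * Real.log 2 - 2)))
  rw [Finset.sum_const, Finset.card_univ, Fintype.card_fin, nsmul_eq_mul, ← mul_assoc] at hself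
  have hlim := hself.add ((tendsto_interactionEnergy_aScaled_sub z₀ hr₀ hb).const_mul π)
  rw [← mul_assoc π r₀] at hlim
  refine hlim.congr' ?_
  filter_upwards [Real.tendsto_log_nhdsGT_zero.eventually_lt_atBot 0,
    eventually_all.2 fun i ↦ (hfst i).eventually (lt_mem_nhds hr₀)] with ε hε hpos
  rw [Hfun_eq_add_interactionEnergy hε hpos]
  linear_combination -π * abs_log_mul_sum_fst_aScaled r₀ z₀ b ε

end ScaledConfigurations

/-- **Remark 1** : expansion of the Hamiltonian and of the reduced Hamiltonian
for `ε`-scaled configurations. -/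
theorem hamiltonian_expansion_scaled (r₀ : ℝ) (hr₀ : 0 < r₀) (z₀ : ℝ) (n : ℕ) (hn : 1 ≤ n)
    (b : Fin n → ℝ × ℝ) (hb : Function.Injective b) :
    Tendsto (fun ε : ℝ => Hfun ε (aScaled r₀ z₀ b ε)
        - (n * r₀ * (π * |Real.log ε| + glGamma + π * n * Real.log r₀
            + π * n * (3 * Real.log 2 - 2) + π * ((n - 1 : ℝ) / 2) * Real.log |Real.log ε|))
        - (π * (∑ i, (b i).1) * Real.sqrt |Real.log ε|
            - π * r₀ * ∑ i, ∑ j ∈ Finset.univ.erase i, Real.log (dE (b i) (b j))))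
      (𝓝[>] 0) (𝓝 0) ∧
    Tendsto (fun ε : ℝ => (Hfun ε (aScaled r₀ z₀ b ε)
          - (|Real.log ε| / (2 * r₀)) * (π * ∑ i, (aScaled r₀ z₀ b ε i).1 ^ 2))
        + (π / 2) * n * r₀ * |Real.log ε|
        - (n * r₀ * (π * |Real.log ε| + glGamma + π * n * Real.log r₀
            + π * n * (3 * Real.log 2 - 2) + π * ((n - 1 : ℝ) / 2) * Real.log |Real.log ε|))
        - π * r₀ * (-(∑ i, ∑ j ∈ Finset.univ.erase i, Real.log (dE (b i) (b j)))
            - (1 / (2 * r₀ ^ 2)) * ∑ i, (b i).1 ^ 2))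
      (𝓝[>] 0) (𝓝 0) := by
  have hloglog (ε : ℝ) : Real.log |Real.log ε| = 2 * Real.log √|Real.log ε| := by
    rw [Real.log_sqrt (abs_nonneg _), mul_div_cancel₀ _ two_ne_zero]
  have hexpansion := tendsto_sub_nhds_zero_iff.2 (tendsto_Hfun_aScaled_sub z₀ hr₀ hb)
  refine ⟨?_, ?_⟩
  · refine hexpansion.congr fun ε ↦ ?_
    rw [hloglog]
    ring
  · refine hexpansion.congr' ?_
    filter_upwards [Real.tendsto_log_nhdsGT_zero.eventually_ne_atBot 0] with ε hε
    have hsq := abs_log_mul_sum_sq_fst_aScaled r₀ z₀ b hε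
    rw [hloglog]
    field_simp
    linear_combination π * hsq

end
end

section
/- (Existence and uniqueness of the singular unimodular multi-vortex map.) Let n ≥ 1 and let a₁,…,aₙ be distinct points in H, and set Ψ*_a := Σᵢ A_{aᵢ}. Then there exists a map u*_a ∈ C^∞(H∖{a₁,…,aₙ}, S¹) ∩ W^{1,1}_loc(H, S¹) such that r j(u*_a) = −∇^⊥(r Ψ*_a) on H∖{a₁,…,aₙ}, and u*_a is unique up to multiplication by a constant of modulus one. Moreover, in the sense of distributions on H, div(r j(u*_a)) = 0 and curl(j(u*_a)) = 2π Σᵢ δ_{aᵢ}, where curl(X_r,X_z) := ∂_r X_z − ∂_z X_r. -/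
open MeasureTheory Filter Metric
open scoped Topology Real

noncomputable section

/-!
For one vortex, `r A_a` is the Stokes stream function of the magnetic field of a current loop
through `a`. Off the loop this field is curl free; its potential is half the solid angle of the disc
spanned by the loop, and the map is the exponential of `i` times this potential. By Stokes' theorem
the potential is, modulo `2π`, the circulation around the loop of the vector potential of a
magnetic monopole. With the Dirac string of the monopole pointing up or down, this gives two
integrals, each smooth off a half-line `r = r(a)` on one side of the plane `z = z(a)`. They agree
for `r > r(a)` and differ by `2π` for `r < r(a)`, so their exponentials glue to one smooth map
off `a`.
The field is recovered from them by differentiating under the integral sign: the `r`-derivative of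
the integrand is the integrand of the field plus an exact derivative in the angle.

Several vortices are superposed by taking products. The potential has an integrable singularity and
jumps by `2π` across a segment ending at `a`, and integrating by parts along lines turns the jump
into the Dirac mass of the curl. The divergence is the same computation for the single-valued
function `r A_a`. Finally, if `u` and `v` have the same current then `v ū` has zero derivative on
the connected set `H ∖ {a₁, …, aₙ}`.
-/

/-! ### Interval integrals depending on a parameter -/

section ParametricIntegral

universe u

variable {E F : Type u} [NormedAddCommGroup E] [NormedAddCommGroup F]
  {U : Set E} {f : E × ℝ → F} {x : E}

lemma exists_nhds_bound_uIcc (hU : IsOpen U) (hf : ContinuousOn f (U ×ˢ Set.univ)) (hx : x ∈ U)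
    (α β : ℝ) : ∃ s ∈ 𝓝 x, s ⊆ U ∧ ∃ C, ∀ y ∈ s, ∀ t ∈ Set.uIcc α β, ‖f (y, t)‖ ≤ C := by
  have hcompact : IsCompact ({x} ×ˢ Set.uIcc α β) := isCompact_singleton.prod isCompact_uIcc
  obtain ⟨C, hC⟩ := hcompact.exists_bound_of_continuousOn
    (hf.mono (Set.prod_mono (Set.singleton_subset_iff.2 hx) (Set.subset_univ _)))
  have hopen : IsOpen (U ×ˢ Set.univ ∩ (fun q => ‖f q‖) ⁻¹' Set.Iio (C + 1)) :=
    hf.norm.isOpen_inter_preimage (hU.prod isOpen_univ) isOpen_Iio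
  obtain ⟨s, s', hs, -, hxs, hs', hsub⟩ := generalized_tube_lemma isCompact_singleton isCompact_uIcc
    hopen fun q hq => ⟨⟨hq.1 ▸ hx, trivial⟩, (hC q hq).trans_lt (lt_add_one C)⟩
  exact ⟨s ∩ U, inter_mem (hs.mem_nhds (hxs rfl)) (hU.mem_nhds hx), Set.inter_subset_right, C + 1,
    fun y hy t ht => (hsub ⟨hy.1, hs' ht⟩).2.le⟩

lemma continuous_slice (hf : ContinuousOn f (U ×ˢ Set.univ)) (hx : x ∈ U) :
    Continuous fun t => f (x, t) :=
  hf.comp_continuous (by fun_prop) fun _ => ⟨hx, trivial⟩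

variable [NormedSpace ℝ F]

lemma continuousOn_integral_param (hU : IsOpen U) (hf : ContinuousOn f (U ×ˢ Set.univ))
    (α β : ℝ) : ContinuousOn (fun x => ∫ t in α..β, f (x, t)) U := by
  intro x hx
  obtain ⟨s, hs, hsU, C, hC⟩ := exists_nhds_bound_uIcc hU hf hx α β
  refine (intervalIntegral.continuousAt_of_dominated_interval (bound := fun _ => C) ?_ ?_
    intervalIntegrable_const ?_).continuousWithinAt
  · filter_upwards [hs] with y hy using (continuous_slice hf (hsU hy)).aestronglyMeasurable
  · filter_upwards [hs] with y hy using
      .of_forall fun t ht => hC y hy t (Set.uIoc_subset_uIcc ht)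
  · exact .of_forall fun t _ => ContinuousAt.comp (f := fun y => (y, t))
      (hf.continuousAt ((hU.prod isOpen_univ).mem_nhds ⟨hx, trivial⟩)) (by fun_prop)

variable [NormedSpace ℝ E]

lemma continuousOn_fderiv_comp_inl (hU : IsOpen U) (hf : ContDiffOn ℝ 1 f (U ×ˢ Set.univ)) :
    ContinuousOn (fun q => (fderiv ℝ f q).comp (.inl ℝ E ℝ)) (U ×ˢ Set.univ) :=
  (hf.continuousOn_fderiv_of_isOpen (hU.prod isOpen_univ) le_rfl).clm_comp continuousOn_const

lemma hasFDerivAt_slice (hU : IsOpen U) (hf : ContDiffOn ℝ 1 f (U ×ˢ Set.univ)) (hx : x ∈ U)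
    (t : ℝ) : HasFDerivAt (fun y => f (y, t)) ((fderiv ℝ f (x, t)).comp (.inl ℝ E ℝ)) x :=
  ((hf.differentiableOn one_ne_zero).differentiableAt
    ((hU.prod isOpen_univ).mem_nhds ⟨hx, trivial⟩)).hasFDerivAt.comp x
      (hasFDerivAt_prodMk_left x t)

lemma hasFDerivAt_integral_param (hU : IsOpen U) (hf : ContDiffOn ℝ 1 f (U ×ˢ Set.univ))
    (hx : x ∈ U) (α β : ℝ) :
    HasFDerivAt (fun x => ∫ t in α..β, f (x, t))
      (∫ t in α..β, (fderiv ℝ f (x, t)).comp (.inl ℝ E ℝ)) x := by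
  have hf' := continuousOn_fderiv_comp_inl hU hf
  obtain ⟨s, hs, hsU, C, hC⟩ := exists_nhds_bound_uIcc hU hf' hx α β
  apply intervalIntegral.hasFDerivAt_integral_of_dominated_of_fderiv_le (bound := fun _ => C)
    (F' := fun x t => (fderiv ℝ f (x, t)).comp (.inl ℝ E ℝ)) hs
  · filter_upwards [hs] with y hy
      using (continuous_slice hf.continuousOn (hsU hy)).aestronglyMeasurable
  · exact (continuous_slice hf.continuousOn hx).intervalIntegrable _ _
  · exact (continuous_slice hf' hx).aestronglyMeasurable
  · exact .of_forall fun t ht y hy => hC y hy t (Set.uIoc_subset_uIcc ht)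
  · exact intervalIntegrable_const
  · exact .of_forall fun t _ y hy => hasFDerivAt_slice hU hf (hsU hy) t

lemma contDiffOn_integral_param_nat (n : ℕ) {F : Type u} [NormedAddCommGroup F]
    [NormedSpace ℝ F] {f : E × ℝ → F} (hU : IsOpen U) (hf : ContDiffOn ℝ n f (U ×ˢ Set.univ))
    (α β : ℝ) : ContDiffOn ℝ n (fun x => ∫ t in α..β, f (x, t)) U := by
  induction n generalizing F with
  | zero => exact contDiffOn_zero.2 (continuousOn_integral_param hU hf.continuousOn α β)
  | succ n ih =>
    have hf₁ : ContDiffOn ℝ 1 f (U ×ˢ Set.univ) := hf.of_le (by norm_cast; omega)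
    rw [Nat.cast_add, Nat.cast_one, contDiffOn_succ_iff_fderiv_of_isOpen hU]
    rw [Nat.cast_add, Nat.cast_one,
      contDiffOn_succ_iff_fderiv_of_isOpen (hU.prod isOpen_univ)] at hf
    have hderiv (x) (hx : x ∈ U) := hasFDerivAt_integral_param hU hf₁ hx α β
    exact ⟨fun x hx => (hderiv x hx).differentiableAt.differentiableWithinAt, by simp,
      (ih (hf.2.2.clm_comp contDiffOn_const)).congr fun x hx => (hderiv x hx).fderiv⟩

lemma contDiffOn_infty_integral_param (hU : IsOpen U)
    (hf : ContDiffOn ℝ (⊤ : ℕ∞) f (U ×ˢ Set.univ)) (α β : ℝ) :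
    ContDiffOn ℝ (⊤ : ℕ∞) (fun x => ∫ t in α..β, f (x, t)) U := by
  rw [contDiffOn_infty] at hf ⊢
  exact fun n => contDiffOn_integral_param_nat n hU (hf n) α β

/-- Terms of the kernel derivative that are `t`-derivatives of closed loops integrate to zero. -/
lemma hasFDerivAt_integral_param_of_exact [CompleteSpace F] (hU : IsOpen U)
    (hf : ContDiffOn ℝ 1 f (U ×ˢ Set.univ)) (hx : x ∈ U) {α β : ℝ} {L W W' : ℝ → E →L[ℝ] F}
    (hslice : ∀ t, HasFDerivAt (fun y => f (y, t)) (L t + W' t) x) (hL : Continuous L)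
    (hW : ∀ t, HasDerivAt W (W' t) t) (hαβ : W α = W β) :
    HasFDerivAt (fun x => ∫ t in α..β, f (x, t)) (∫ t in α..β, L t) x := by
  have heq : (fun t => (fderiv ℝ f (x, t)).comp (.inl ℝ E ℝ)) = fun t => L t + W' t :=
    funext fun t => (hasFDerivAt_slice hU hf hx t).unique (hslice t)
  have hcont : Continuous fun t => L t + W' t :=
    heq ▸ continuous_slice (continuousOn_fderiv_comp_inl hU hf) hx
  have hW' : Continuous W' := (hcont.sub hL).congr fun t => by simp
  refine (hasFDerivAt_integral_param hU hf hx α β).congr_fderiv ?_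
  rw [heq, intervalIntegral.integral_add (hL.intervalIntegrable _ _) (hW'.intervalIntegrable _ _),
    intervalIntegral.integral_eq_sub_of_hasDerivAt (fun t _ => hW t) (hW'.intervalIntegrable _ _),
    hαβ, sub_self, add_zero]

end ParametricIntegral

/-- The covector `P dr + Q dz` on `ℝ × ℝ`. -/
def covector (P Q : ℝ) : ℝ × ℝ →L[ℝ] ℝ :=
  P • ContinuousLinearMap.fst ℝ ℝ ℝ + Q • ContinuousLinearMap.snd ℝ ℝ ℝ

@[simp]
lemma covector_apply (P Q : ℝ) (v : ℝ × ℝ) : covector P Q v = P * v.1 + Q * v.2 := by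
  simp [covector]

lemma covector_ext {P Q P' Q' : ℝ} (hP : P = P') (hQ : Q = Q') :
    covector P Q = covector P' Q' := by rw [hP, hQ]

lemma smul_covector (c P Q : ℝ) : c • covector P Q = covector (c * P) (c * Q) := by
  ext <;> simp

@[fun_prop]
lemma continuous_covector {X : Type*} [TopologicalSpace X] {A B : X → ℝ} (hA : Continuous A)
    (hB : Continuous B) : Continuous fun x => covector (A x) (B x) := by
  unfold covector; fun_prop

lemma intervalIntegral_covector {A B : ℝ → ℝ} {α β : ℝ} (hA : IntervalIntegrable A volume α β)
    (hB : IntervalIntegrable B volume α β) :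
    ∫ t in α..β, covector (A t) (B t) = covector (∫ t in α..β, A t) (∫ t in α..β, B t) := by
  simp only [covector]
  rw [intervalIntegral.integral_add (hA.smul_continuousOn continuousOn_const)
      (hB.smul_continuousOn continuousOn_const),
    intervalIntegral.integral_smul_const, intervalIntegral.integral_smul_const]

lemma hasFDerivAt_integral_param_covector {U : Set (ℝ × ℝ)} {f : (ℝ × ℝ) × ℝ → ℝ} {p : ℝ × ℝ}
    {α β : ℝ} {A B w w' : ℝ → ℝ} (hU : IsOpen U) (hf : ContDiffOn ℝ 1 f (U ×ˢ Set.univ))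
    (hp : p ∈ U) (hslice : ∀ t, HasFDerivAt (fun q => f (q, t)) (covector (A t + w' t) (B t)) p)
    (hA : Continuous A) (hB : Continuous B) (hw : ∀ t, HasDerivAt w (w' t) t)
    (hαβ : w α = w β) :
    HasFDerivAt (fun q => ∫ t in α..β, f (q, t))
      (covector (∫ t in α..β, A t) (∫ t in α..β, B t)) p := by
  rw [← intervalIntegral_covector (hA.intervalIntegrable _ _) (hB.intervalIntegrable _ _)]
  refine hasFDerivAt_integral_param_of_exact hU hf hp (W := fun t => covector (w t) 0)
    (W' := fun t => covector (w' t) 0) (fun t => (hslice t).congr_fderiv ?_) (by fun_prop)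
    (fun t => ?_) (by rw [hαβ])
  · ext <;> simp
  · simpa [covector] using (hw t).smul_const (ContinuousLinearMap.fst ℝ ℝ ℝ)

lemma hasFDerivAt_div_covector {f g : ℝ × ℝ → ℝ} {p : ℝ × ℝ} {P Q R S : ℝ}
    (hf : HasFDerivAt f (covector P Q) p) (hg : HasFDerivAt g (covector R S) p) (h0 : g p ≠ 0) :
    HasFDerivAt (fun q => f q / g q)
      (covector ((P * g p - f p * R) / g p ^ 2) ((Q * g p - f p * S) / g p ^ 2)) p := by
  have hinv := (hasDerivAt_inv h0).comp_hasFDerivAt p hg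
  refine (hf.mul hinv).congr_fderiv ?_
  ext <;> simp <;> field_simp <;> ring

/-! ### The distance to a ring -/

/-- Distance in `ℝ³` from the ring of radius `r(a)` and height `z(a)`, at angle `t`, to the point of
the meridian half-plane with cylindrical coordinates `p`. -/
def ringDist (a p : ℝ × ℝ) (t : ℝ) : ℝ :=
  √(a.1 ^ 2 + p.1 ^ 2 + (p.2 - a.2) ^ 2 - 2 * a.1 * p.1 * Real.cos t)

section RingDist

variable {a p : ℝ × ℝ}

lemma isOpen_Hp : IsOpen Hp := isOpen_lt continuous_const continuous_fst

lemma isOpen_Hp_diff_singleton (a : ℝ × ℝ) : IsOpen (Hp \ {a}) :=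
  isOpen_Hp.sdiff isClosed_singleton

lemma ringDist_sq (a p : ℝ × ℝ) (t : ℝ) :
    ringDist a p t ^ 2 = (a.1 - p.1 * Real.cos t) ^ 2 + (p.1 * Real.sin t) ^ 2
      + (p.2 - a.2) ^ 2 := by
  have hexpand : a.1 ^ 2 + p.1 ^ 2 + (p.2 - a.2) ^ 2 - 2 * a.1 * p.1 * Real.cos t
      = (a.1 - p.1 * Real.cos t) ^ 2 + (p.1 * Real.sin t) ^ 2 + (p.2 - a.2) ^ 2 := by
    linear_combination -p.1 ^ 2 * Real.sin_sq_add_cos_sq t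
  rw [ringDist, Real.sq_sqrt (by rw [hexpand]; positivity), hexpand]

lemma ringDist_nonneg (a p : ℝ × ℝ) (t : ℝ) : 0 ≤ ringDist a p t := Real.sqrt_nonneg _

lemma abs_sub_mul_cos_le_ringDist (a p : ℝ × ℝ) (t : ℝ) :
    |a.1 - p.1 * Real.cos t| ≤ ringDist a p t :=
  abs_le_of_sq_le_sq (by rw [ringDist_sq]; nlinarith) (ringDist_nonneg a p t)

lemma abs_snd_sub_le_ringDist (a p : ℝ × ℝ) (t : ℝ) : |p.2 - a.2| ≤ ringDist a p t :=
  abs_le_of_sq_le_sq (by rw [ringDist_sq]; nlinarith) (ringDist_nonneg a p t)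

lemma ringDist_sq_eq_add (a p : ℝ × ℝ) (t : ℝ) :
    ringDist a p t ^ 2 = (p.1 - a.1) ^ 2 + (p.2 - a.2) ^ 2
      + 2 * a.1 * p.1 * (1 - Real.cos t) := by
  rw [ringDist_sq]
  linear_combination p.1 ^ 2 * Real.sin_sq_add_cos_sq t

lemma abs_fst_sub_le_ringDist (ha : a ∈ Hp) (hp : p ∈ Hp) (t : ℝ) :
    |p.1 - a.1| ≤ ringDist a p t := by
  have hmul : 0 ≤ a.1 * p.1 * (1 - Real.cos t) :=
    mul_nonneg (mul_pos ha hp).le (sub_nonneg.2 (Real.cos_le_one t))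
  exact abs_le_of_sq_le_sq (by rw [ringDist_sq_eq_add]; nlinarith) (ringDist_nonneg a p t)

lemma dist_le_ringDist (ha : a ∈ Hp) (hp : p ∈ Hp) (t : ℝ) : dist p a ≤ ringDist a p t := by
  rw [Prod.dist_eq, Real.dist_eq, Real.dist_eq]
  exact max_le (abs_fst_sub_le_ringDist ha hp t) (abs_snd_sub_le_ringDist a p t)

lemma ringDist_pos (ha : a ∈ Hp) (hp : p ∈ Hp \ {a}) (t : ℝ) : 0 < ringDist a p t :=
  (dist_pos.2 hp.2).trans_le (dist_le_ringDist ha hp.1 t)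

@[fun_prop]
lemma continuous_ringDist (a p : ℝ × ℝ) : Continuous (ringDist a p) := by
  unfold ringDist; fun_prop

lemma contDiffOn_ringDist (ha : a ∈ Hp) :
    ContDiffOn ℝ (⊤ : ℕ∞) (fun q : (ℝ × ℝ) × ℝ => ringDist a q.1 q.2)
      ((Hp \ {a}) ×ˢ Set.univ) := by
  unfold ringDist
  refine ContDiffOn.sqrt (ContDiff.contDiffOn (by fun_prop)) fun q hq => ?_
  exact (Real.sqrt_pos.1 (ringDist_pos ha hq.1 q.2)).ne'

lemma hasFDerivAt_ringDist (ha : a ∈ Hp) (hp : p ∈ Hp \ {a}) (t : ℝ) :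
    HasFDerivAt (fun q => ringDist a q t)
      (covector ((p.1 - a.1 * Real.cos t) / ringDist a p t) ((p.2 - a.2) / ringDist a p t)) p := by
  have hpos := ringDist_pos ha hp t
  have hradicand : HasFDerivAt
      (fun q : ℝ × ℝ => a.1 ^ 2 + q.1 ^ 2 + (q.2 - a.2) ^ 2 - 2 * a.1 * q.1 * Real.cos t)
      (covector (2 * (p.1 - a.1 * Real.cos t)) (2 * (p.2 - a.2))) p := by
    have hr : HasFDerivAt Prod.fst (ContinuousLinearMap.fst ℝ ℝ ℝ) p := hasFDerivAt_fst
    have hz : HasFDerivAt Prod.snd (ContinuousLinearMap.snd ℝ ℝ ℝ) p := hasFDerivAt_snd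
    refine ((((hr.pow 2).const_add (a.1 ^ 2)).add ((hz.sub_const a.2).pow 2)).sub
      ((hr.const_mul (2 * a.1)).mul_const (Real.cos t))).congr_fderiv ?_
    ext <;> simp
    ring
  refine (hradicand.sqrt (Real.sqrt_pos.1 hpos).ne').congr_fderiv ?_
  change (1 / (2 * ringDist a p t)) • _ = _
  ext <;> simp <;> field_simp

lemma hasDerivAt_ringDist (ha : a ∈ Hp) (hp : p ∈ Hp \ {a}) (t : ℝ) :
    HasDerivAt (ringDist a p) (a.1 * p.1 * Real.sin t / ringDist a p t) t := by
  have hpos := ringDist_pos ha hp t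
  refine ((((Real.hasDerivAt_cos t).const_mul (2 * a.1 * p.1)).const_sub
    (a.1 ^ 2 + p.1 ^ 2 + (p.2 - a.2) ^ 2)).sqrt (Real.sqrt_pos.1 hpos).ne').congr_deriv ?_
  change _ / (2 * ringDist a p t) = _
  field_simp

end RingDist

/-! ### The current and the stream function of one ring -/

/-- The `r`-component of the current of one vortex ring, given by the Biot–Savart law. -/
def ringCurrentR (a p : ℝ × ℝ) : ℝ :=
  -(a.1 / 2) * ∫ t in (0:ℝ)..(2 * π), Real.cos t * (p.2 - a.2) / ringDist a p t ^ 3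

/-- The `z`-component of the current of one vortex ring, given by the Biot–Savart law. -/
def ringCurrentZ (a p : ℝ × ℝ) : ℝ :=
  -(a.1 / 2) * ∫ t in (0:ℝ)..(2 * π), (a.1 - p.1 * Real.cos t) / ringDist a p t ^ 3

section RingCurrent

variable {a p : ℝ × ℝ}

lemma ringDist_ne_zero (ha : a ∈ Hp) (hp : p ∈ Hp \ {a}) (t : ℝ) : ringDist a p t ≠ 0 :=
  (ringDist_pos ha hp t).ne'

lemma contDiffOn_ringCurrentR (ha : a ∈ Hp) :
    ContDiffOn ℝ (⊤ : ℕ∞) (ringCurrentR a) (Hp \ {a}) := by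
  refine contDiffOn_const.mul (contDiffOn_infty_integral_param (f := fun q : (ℝ × ℝ) × ℝ =>
    Real.cos q.2 * (q.1.2 - a.2) / ringDist a q.1 q.2 ^ 3) (isOpen_Hp_diff_singleton a) ?_ _ _)
  exact ContDiffOn.div (ContDiff.contDiffOn (by fun_prop)) ((contDiffOn_ringDist ha).pow 3)
    fun q hq => pow_ne_zero 3 (ringDist_ne_zero ha hq.1 q.2)

lemma contDiffOn_ringCurrentZ (ha : a ∈ Hp) :
    ContDiffOn ℝ (⊤ : ℕ∞) (ringCurrentZ a) (Hp \ {a}) := by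
  refine contDiffOn_const.mul (contDiffOn_infty_integral_param (f := fun q : (ℝ × ℝ) × ℝ =>
    (a.1 - q.1.1 * Real.cos q.2) / ringDist a q.1 q.2 ^ 3) (isOpen_Hp_diff_singleton a) ?_ _ _)
  exact ContDiffOn.div (ContDiff.contDiffOn (by fun_prop)) ((contDiffOn_ringDist ha).pow 3)
    fun q hq => pow_ne_zero 3 (ringDist_ne_zero ha hq.1 q.2)

/-- After an exact `t`-derivative is split off, the derivative of the kernel of the stream function
is the kernel of the current. -/
lemma hasFDerivAt_cos_div_ringDist (ha : a ∈ Hp) (hp : p ∈ Hp \ {a}) (t : ℝ) :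
    HasFDerivAt (fun q => q.1 * Real.cos t / ringDist a q t)
      (covector (p.1 * ((a.1 - p.1 * Real.cos t) / ringDist a p t ^ 3)
        + (Real.cos t * ringDist a p t - Real.sin t * (a.1 * p.1 * Real.sin t / ringDist a p t))
          / ringDist a p t ^ 2)
        (-p.1 * (Real.cos t * (p.2 - a.2) / ringDist a p t ^ 3))) p := by
  have hnum : HasFDerivAt (fun q : ℝ × ℝ => q.1 * Real.cos t) (covector (Real.cos t) 0) p := by
    simpa [covector] using (hasFDerivAt_fst (𝕜 := ℝ) (p := p)).mul_const (Real.cos t)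
  have hS := ringDist_ne_zero ha hp t
  refine (hasFDerivAt_div_covector hnum (hasFDerivAt_ringDist ha hp t) hS).congr_fderiv
    (covector_ext ?_ ?_)
  · field_simp
    linear_combination a.1 * p.1 * Real.sin_sq_add_cos_sq t
  · field_simp
    ring

lemma mul_Avec_eq_integral (a q : ℝ × ℝ) :
    q.1 * Avec a q = a.1 / 2 * ∫ t in (0:ℝ)..(2 * π), q.1 * Real.cos t / ringDist a q t := by
  simp only [mul_div_assoc, intervalIntegral.integral_const_mul]
  exact mul_left_comm _ _ _

lemma continuous_ringCurrentR_integrand (ha : a ∈ Hp) (hp : p ∈ Hp \ {a}) :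
    Continuous fun t => Real.cos t * (p.2 - a.2) / ringDist a p t ^ 3 :=
  Continuous.div (by fun_prop) (by fun_prop) fun t => pow_ne_zero 3 (ringDist_ne_zero ha hp t)

lemma continuous_ringCurrentZ_integrand (ha : a ∈ Hp) (hp : p ∈ Hp \ {a}) :
    Continuous fun t => (a.1 - p.1 * Real.cos t) / ringDist a p t ^ 3 :=
  Continuous.div (by fun_prop) (by fun_prop) fun t => pow_ne_zero 3 (ringDist_ne_zero ha hp t)

lemma contDiffOn_cos_div_ringDist (ha : a ∈ Hp) :
    ContDiffOn ℝ (⊤ : ℕ∞) (fun q : (ℝ × ℝ) × ℝ => q.1.1 * Real.cos q.2 / ringDist a q.1 q.2)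
      ((Hp \ {a}) ×ˢ Set.univ) :=
  ContDiffOn.div (ContDiff.contDiffOn (by fun_prop)) (contDiffOn_ringDist ha)
    fun q hq => ringDist_ne_zero ha hq.1 q.2

lemma hasFDerivAt_mul_Avec (ha : a ∈ Hp) (hp : p ∈ Hp \ {a}) :
    HasFDerivAt (fun q : ℝ × ℝ => q.1 * Avec a q)
      (covector (-(p.1 * ringCurrentZ a p)) (p.1 * ringCurrentR a p)) p := by
  have hloop (t : ℝ) := (Real.hasDerivAt_sin t).div (hasDerivAt_ringDist ha hp t)
    (ringDist_ne_zero ha hp t)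
  have hderiv := hasFDerivAt_integral_param_covector (α := 0) (β := 2 * π)
    (isOpen_Hp_diff_singleton a) ((contDiffOn_cos_div_ringDist ha).of_le (mod_cast le_top)) hp
    (hasFDerivAt_cos_div_ringDist ha hp)
    (continuous_const.mul (continuous_ringCurrentZ_integrand ha hp))
    (continuous_const.mul (continuous_ringCurrentR_integrand ha hp)) hloop (by simp)
  simp only [mul_Avec_eq_integral]
  refine (hderiv.const_mul (a.1 / 2)).congr_fderiv ?_
  rw [smul_covector, intervalIntegral.integral_const_mul, intervalIntegral.integral_const_mul,
    ringCurrentR, ringCurrentZ]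
  exact covector_ext (by ring) (by ring)

end RingCurrent

/-! ### The two branches of the phase -/

/-- For `σ = ±1`, half the solid angle at `p` of the disc spanned by the ring, modulo `2π`, as the
circulation along the ring of the vector potential of a monopole at `p` whose Dirac string points
upwards (`σ = 1`) or downwards (`σ = -1`). -/
def phaseBranch (σ : ℝ) (a p : ℝ × ℝ) : ℝ :=
  σ * (a.1 / 2) * ∫ t in (0:ℝ)..(2 * π),
    (a.1 - p.1 * Real.cos t) / (ringDist a p t * (σ * (p.2 - a.2) + ringDist a p t))

/-- The points of the half-plane whose Dirac string, in the sense of `phaseBranch σ a`, misses the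
ring. -/
def phaseDomain (σ : ℝ) (a : ℝ × ℝ) : Set (ℝ × ℝ) :=
  {p | p ∈ Hp ∧ (p.1 ≠ a.1 ∨ 0 < σ * (p.2 - a.2))}

section PhaseBranch

variable {σ : ℝ} {a p : ℝ × ℝ}

lemma isOpen_phaseDomain (σ : ℝ) (a : ℝ × ℝ) : IsOpen (phaseDomain σ a) :=
  isOpen_Hp.inter <| (isOpen_ne_fun continuous_fst continuous_const).union <|
    isOpen_lt continuous_const
      (by fun_prop : Continuous fun p : ℝ × ℝ => σ * (p.2 - a.2))

lemma phaseDomain_subset (σ : ℝ) (a : ℝ × ℝ) : phaseDomain σ a ⊆ Hp \ {a} := by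
  rintro p ⟨hp, hpa⟩
  refine ⟨hp, ?_⟩
  rintro rfl
  simp at hpa

lemma add_ringDist_pos (hσ : σ ^ 2 = 1) (ha : a ∈ Hp) (hp : p ∈ phaseDomain σ a) (t : ℝ) :
    0 < σ * (p.2 - a.2) + ringDist a p t := by
  have hS := ringDist_pos ha (phaseDomain_subset σ a hp) t
  rcases lt_or_ge 0 (σ * (p.2 - a.2)) with h | h
  · positivity
  have hr : 0 < (p.1 - a.1) ^ 2 := sq_pos_of_ne_zero (sub_ne_zero.2 (hp.2.resolve_right h.not_gt))
  have hcos : 0 ≤ a.1 * p.1 * (1 - Real.cos t) :=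
    mul_nonneg (mul_pos ha hp.1).le (sub_nonneg.2 (Real.cos_le_one t))
  have hsq : (σ * (p.2 - a.2)) ^ 2 < ringDist a p t ^ 2 := by
    rw [ringDist_sq_eq_add, mul_pow, hσ]
    linarith
  linarith [neg_lt_of_abs_lt (abs_lt_of_sq_lt_sq hsq hS.le)]

lemma ringDist_mul_add_ne_zero (hσ : σ ^ 2 = 1) (ha : a ∈ Hp) (hp : p ∈ phaseDomain σ a)
    (t : ℝ) : ringDist a p t * (σ * (p.2 - a.2) + ringDist a p t) ≠ 0 :=
  mul_ne_zero (ringDist_ne_zero ha (phaseDomain_subset σ a hp) t) (add_ringDist_pos hσ ha hp t).ne'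

lemma contDiffOn_phaseBranch_integrand (hσ : σ ^ 2 = 1) (ha : a ∈ Hp) :
    ContDiffOn ℝ (⊤ : ℕ∞) (fun q : (ℝ × ℝ) × ℝ => (a.1 - q.1.1 * Real.cos q.2) /
      (ringDist a q.1 q.2 * (σ * (q.1.2 - a.2) + ringDist a q.1 q.2)))
      (phaseDomain σ a ×ˢ Set.univ) := by
  have hS := (contDiffOn_ringDist ha).mono
    (Set.prod_mono (phaseDomain_subset σ a) (Set.Subset.refl Set.univ))
  exact ContDiffOn.div (ContDiff.contDiffOn (by fun_prop))
    (hS.mul (ContDiffOn.add (ContDiff.contDiffOn (by fun_prop)) hS))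
    fun q hq => ringDist_mul_add_ne_zero hσ ha hq.1 q.2

lemma contDiffOn_phaseBranch (hσ : σ ^ 2 = 1) (ha : a ∈ Hp) :
    ContDiffOn ℝ (⊤ : ℕ∞) (phaseBranch σ a) (phaseDomain σ a) :=
  contDiffOn_const.mul (contDiffOn_infty_integral_param (isOpen_phaseDomain σ a)
    (contDiffOn_phaseBranch_integrand hσ ha) 0 (2 * π))

lemma hasFDerivAt_ringDist_mul_add (ha : a ∈ Hp) (hp : p ∈ Hp \ {a}) (t : ℝ) :
    HasFDerivAt (fun q => ringDist a q t * (σ * (q.2 - a.2) + ringDist a q t))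
      (covector ((p.1 - a.1 * Real.cos t) / ringDist a p t
          * (σ * (p.2 - a.2) + 2 * ringDist a p t))
        ((p.2 - a.2) / ringDist a p t * (σ * (p.2 - a.2) + 2 * ringDist a p t)
          + σ * ringDist a p t)) p := by
  have hS := hasFDerivAt_ringDist ha hp t
  have hz : HasFDerivAt (fun q : ℝ × ℝ => σ * (q.2 - a.2)) (covector 0 σ) p := by
    simpa [covector] using ((hasFDerivAt_snd (𝕜 := ℝ) (p := p)).sub_const a.2).const_mul σ
  refine (hS.mul (hz.add hS)).congr_fderiv ?_
  ext <;> simp <;> ring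

/-- The algebra behind the `r`-derivative of the kernel of the phase: with `S` the distance to the
ring point at angle `t`, `ζ` the signed height and `C = cos t`, `s = sin t`, the second summand
on the right is the `t`-derivative of `s / (S * (ζ + S))`. -/
lemma phase_kernel_identity {α r ζ S C s : ℝ} (hS : S ≠ 0) (hT : ζ + S ≠ 0)
    (hsq : S ^ 2 = (r - α) ^ 2 + ζ ^ 2 + 2 * α * r * (1 - C)) (hCs : s ^ 2 + C ^ 2 = 1) :
    (-C * (S * (ζ + S)) - (α - r * C) * ((r - α * C) / S * (ζ + 2 * S))) / (S * (ζ + S)) ^ 2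
      = -(C * ζ / S ^ 3)
        + (C * (S * (ζ + S)) - s * (α * r * s / S * (ζ + S) + S * (α * r * s / S)))
          / (S * (ζ + S)) ^ 2 := by
  have hs : s ^ 2 = 1 - C ^ 2 := by linarith
  field_simp
  rw [hs]
  linear_combination -(ζ + 2 * S) * C * hsq

lemma hasFDerivAt_phaseBranch_integrand (hσ : σ ^ 2 = 1) (ha : a ∈ Hp)
    (hp : p ∈ phaseDomain σ a) (t : ℝ) :
    HasFDerivAt (fun q => (a.1 - q.1 * Real.cos t) /
        (ringDist a q t * (σ * (q.2 - a.2) + ringDist a q t)))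
      (covector (-σ * (Real.cos t * (p.2 - a.2) / ringDist a p t ^ 3)
        + (Real.cos t * (ringDist a p t * (σ * (p.2 - a.2) + ringDist a p t))
          - Real.sin t * (a.1 * p.1 * Real.sin t / ringDist a p t
              * (σ * (p.2 - a.2) + ringDist a p t)
            + ringDist a p t * (a.1 * p.1 * Real.sin t / ringDist a p t)))
          / (ringDist a p t * (σ * (p.2 - a.2) + ringDist a p t)) ^ 2)
        (-σ * ((a.1 - p.1 * Real.cos t) / ringDist a p t ^ 3))) p := by
  have hp' := phaseDomain_subset σ a hp
  have hS := ringDist_ne_zero ha hp' t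
  have hT := (add_ringDist_pos hσ ha hp t).ne'
  have hnum : HasFDerivAt (fun q : ℝ × ℝ => a.1 - q.1 * Real.cos t)
      (covector (-Real.cos t) 0) p := by
    refine (((hasFDerivAt_fst (𝕜 := ℝ) (p := p)).mul_const (Real.cos t)).const_sub
      a.1).congr_fderiv ?_
    ext <;> simp
  refine (hasFDerivAt_div_covector hnum (hasFDerivAt_ringDist_mul_add ha hp' t)
    (mul_ne_zero hS hT)).congr_fderiv (covector_ext ?_ ?_)
  · have hsq : ringDist a p t ^ 2 = (p.1 - a.1) ^ 2 + (σ * (p.2 - a.2)) ^ 2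
        + 2 * a.1 * p.1 * (1 - Real.cos t) := by
      rw [ringDist_sq_eq_add, mul_pow, hσ, one_mul]
    rw [phase_kernel_identity hS hT hsq (Real.sin_sq_add_cos_sq t)]
    ring
  · have hz : p.2 - a.2 = σ * (σ * (p.2 - a.2)) := by rw [← mul_assoc, ← sq, hσ, one_mul]
    generalize ringDist a p t = S at *
    generalize σ * (p.2 - a.2) = ζ at *
    rw [hz]
    field_simp
    ring

lemma hasFDerivAt_phaseBranch (hσ : σ ^ 2 = 1) (ha : a ∈ Hp) (hp : p ∈ phaseDomain σ a) :
    HasFDerivAt (phaseBranch σ a) (covector (ringCurrentR a p) (ringCurrentZ a p)) p := by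
  have hp' := phaseDomain_subset σ a hp
  have hloop (t : ℝ) := (Real.hasDerivAt_sin t).div
    ((hasDerivAt_ringDist ha hp' t).mul
      ((hasDerivAt_ringDist ha hp' t).const_add (σ * (p.2 - a.2))))
    (ringDist_mul_add_ne_zero hσ ha hp t)
  have hderiv := hasFDerivAt_integral_param_covector (α := 0) (β := 2 * π)
    (isOpen_phaseDomain σ a)
    ((contDiffOn_phaseBranch_integrand hσ ha).of_le (mod_cast le_top)) hp
    (hasFDerivAt_phaseBranch_integrand hσ ha hp)
    (continuous_const.mul (continuous_ringCurrentR_integrand ha hp'))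
    (continuous_const.mul (continuous_ringCurrentZ_integrand ha hp')) hloop (by simp)
  refine (hderiv.const_mul (σ * (a.1 / 2))).congr_fderiv ?_
  rw [smul_covector, intervalIntegral.integral_const_mul, intervalIntegral.integral_const_mul]
  refine covector_ext ?_ ?_
  · rw [ringCurrentR]
    linear_combination -(a.1 / 2 * ∫ t in (0:ℝ)..(2 * π),
      Real.cos t * (p.2 - a.2) / ringDist a p t ^ 3) * hσ
  · rw [ringCurrentZ]
    linear_combination -(a.1 / 2 * ∫ t in (0:ℝ)..(2 * π),
      (a.1 - p.1 * Real.cos t) / ringDist a p t ^ 3) * hσ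

end PhaseBranch

/-! ### The jump between the two branches -/

lemma circleIntegral_sub_inv_of_notMem_closedBall {c w : ℂ} {R : ℝ} (hR : 0 ≤ R)
    (hw : w ∉ closedBall c R) : ∮ z in C(c, R), (z - w)⁻¹ = 0 := by
  have hne (z : ℂ) (hz : z ∈ closedBall c R) : z - w ≠ 0 :=
    sub_ne_zero.2 (ne_of_mem_of_not_mem hz hw)
  exact Complex.circleIntegral_eq_zero_of_differentiable_on_off_countable hR Set.countable_empty
    (ContinuousOn.inv₀ (by fun_prop) hne) fun z hz =>
      DifferentiableAt.inv (by fun_prop) (hne z (ball_subset_closedBall hz.1))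

/-- With `z = circleMap 0 r t`, one has `A / (A - z) dt = -i (1 / z - 1 / (z - A)) dz`. -/
lemma integral_div_sub_circleMap {A r : ℝ} (hA : 0 < A) (hr : 0 < r) (hne : r ≠ A) :
    ∫ t in (0:ℝ)..(2 * π), (A:ℂ) / (A - circleMap 0 r t) = if r < A then 2 * π else 0 := by
  have hA0 : (A:ℂ) ∉ sphere 0 r := by simpa [abs_of_pos hA] using hne.symm
  have hz (t : ℝ) : circleMap 0 r t ≠ 0 := circleMap_ne_center hr.ne'
  have hzA (t : ℝ) : circleMap 0 r t - A ≠ 0 := fun h =>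
    hA0 (sub_eq_zero.1 h ▸ circleMap_mem_sphere 0 hr.le t)
  have hint (w : ℂ) (hw : w ∉ sphere 0 r) : CircleIntegrable (fun z => (z - w)⁻¹) 0 r :=
    circleIntegrable_sub_inv_iff.2 (.inr (by rwa [abs_of_pos hr]))
  have hresidues : ∮ z in C(0, r), ((z - 0)⁻¹ - (z - A)⁻¹)
      = Complex.I * if r < A then 2 * π else 0 := by
    rw [circleIntegral.integral_sub (hint 0 (by simpa using hr.ne)) (hint A hA0),
      circleIntegral.integral_sub_center_inv 0 hr.ne']
    rcases hne.lt_or_gt with h | h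
    · rw [circleIntegral_sub_inv_of_notMem_closedBall hr.le (by simpa [abs_of_pos hA] using h)]
      simp [h, mul_comm]
    · rw [circleIntegral.integral_sub_inv_of_mem_ball (by simpa [abs_of_pos hA] using h)]
      simp [h.not_gt]
  refine mul_left_cancel₀ Complex.I_ne_zero (Eq.trans ?_ hresidues)
  rw [← intervalIntegral.integral_const_mul, circleIntegral]
  refine intervalIntegral.integral_congr fun t _ => ?_
  have hAz : (A:ℂ) - circleMap 0 r t ≠ 0 := by
    rw [← neg_sub]; exact neg_ne_zero.2 (hzA t)
  simp only [deriv_circleMap, smul_eq_mul, sub_zero]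
  field_simp [hz t, hzA t]
  ring

lemma integral_angular {A r : ℝ} (hA : 0 < A) (hr : 0 < r) (hne : r ≠ A) :
    ∫ t in (0:ℝ)..(2 * π), A * (A - r * Real.cos t) /
        ((A - r * Real.cos t) ^ 2 + (r * Real.sin t) ^ 2) = if r < A then 2 * π else 0 := by
  have hcont : Continuous fun t => (A:ℂ) / (A - circleMap 0 r t) := by
    refine continuous_const.div (by fun_prop) fun t h => hne ?_
    simpa [hr.le, abs_of_pos, hA, hr] using congrArg norm (sub_eq_zero.1 h).symm
  have hre := congrArg Complex.re (integral_div_sub_circleMap hA hr hne)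
  rw [← Complex.reCLM_apply, ← Complex.reCLM.intervalIntegral_comp_comm
    (hcont.intervalIntegrable _ _)] at hre
  refine Eq.trans (intervalIntegral.integral_congr fun t _ => ?_)
    (hre.trans (by split_ifs <;> simp))
  simp [circleMap, Complex.div_re, Complex.normSq_apply, Complex.exp_re, Complex.exp_im, sq]

/-- The branches have opposite strings, and `S + ζ`, `S - ζ` multiply to the squared distance within
the horizontal plane, so the difference is an angular integral. -/
lemma phaseBranch_one_sub_phaseBranch_neg_one {a p : ℝ × ℝ} (ha : a ∈ Hp) (hp : p ∈ Hp)
    (hne : p.1 ≠ a.1) :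
    phaseBranch 1 a p - phaseBranch (-1) a p = if p.1 < a.1 then 2 * π else 0 := by
  have hmem (σ : ℝ) : p ∈ phaseDomain σ a := ⟨hp, .inl hne⟩
  have hint {σ : ℝ} (hσ : σ ^ 2 = 1) := (continuous_slice
    (contDiffOn_phaseBranch_integrand hσ ha).continuousOn (hmem σ)).intervalIntegrable
      (μ := volume) 0 (2 * π)
  rw [← integral_angular ha hp hne, phaseBranch, phaseBranch,
    ← intervalIntegral.integral_const_mul, ← intervalIntegral.integral_const_mul,
    ← intervalIntegral.integral_sub ((hint (by norm_num)).const_mul _)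
      ((hint (by norm_num)).const_mul _)]
  refine intervalIntegral.integral_congr fun t _ => ?_
  have hS := ringDist_pos ha (phaseDomain_subset 1 a (hmem 1)) t
  have hT₁ := (add_ringDist_pos (by norm_num) ha (hmem 1) t).ne'
  have hT₂ := (add_ringDist_pos (by norm_num) ha (hmem (-1)) t).ne'
  have hfactor : (a.1 - p.1 * Real.cos t) ^ 2 + (p.1 * Real.sin t) ^ 2
      = (1 * (p.2 - a.2) + ringDist a p t) * (-1 * (p.2 - a.2) + ringDist a p t) := by
    linear_combination -ringDist_sq a p t
  simp only [hfactor]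
  generalize ringDist a p t = S at *
  generalize p.2 - a.2 = ζ at *
  rw [one_mul] at hT₁ ⊢
  rw [neg_one_mul] at hT₂ ⊢
  field_simp
  ring

/-! ### Local integrability of a singularity of order one -/

section LocalIntegrability

variable {E F : Type*} [NormedAddCommGroup E] [NormedSpace ℝ E] [FiniteDimensional ℝ E]
  [MeasurableSpace E] [BorelSpace E] {μ : Measure E} [μ.IsAddHaarMeasure]

lemma integrableOn_ball_inv_norm (hE : 1 < Module.finrank ℝ E) (r : ℝ) :
    IntegrableOn (fun x : E => ‖x‖⁻¹) (ball 0 r) μ := by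
  have : Nontrivial E := Module.nontrivial_of_finrank_pos (R := ℝ) (by omega)
  rw [integrableOn_fun_norm_addHaar μ (f := fun y : ℝ => y⁻¹)]
  refine IntegrableOn.congr_fun (f := fun y : ℝ => y ^ (Module.finrank ℝ E - 2)) ?_
    (fun y hy => ?_) measurableSet_Ioo
  · exact (continuous_pow _).integrableOn_Icc.mono_set Set.Ioo_subset_Icc_self
  · obtain ⟨n, hn⟩ := Nat.exists_eq_add_of_lt hE
    simp only [hn, smul_eq_mul]
    rw [show 1 + n + 1 - 2 = n by omega, show 1 + n + 1 - 1 = n + 1 by omega, pow_succ,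
      mul_inv_cancel_right₀ hy.1.ne']

lemma locallyIntegrable_inv_dist (hE : 1 < Module.finrank ℝ E) (a : E) :
    LocallyIntegrable (fun x => (dist x a)⁻¹) μ := by
  intro x
  refine ⟨ball a (dist x a + 1), isOpen_ball.mem_nhds (lt_add_one (dist x a)), ?_⟩
  have hint := (integrable_indicator_iff measurableSet_ball).2
    (integrableOn_ball_inv_norm (μ := μ) hE (dist x a + 1))
  refine (integrable_indicator_iff measurableSet_ball).1 ((hint.comp_sub_right a).congr ?_)
  exact .of_forall fun y => by simp [Set.indicator, dist_eq_norm]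

variable [NormedAddCommGroup F]

lemma locallyIntegrableOn_of_norm_le_div_dist (hE : 1 < Module.finrank ℝ E) {f : E → F} {B : E → ℝ}
    {U V : Set E} {a : E} (hU : IsOpen U) (hV : MeasurableSet V) (hUV : U ≤ᵐ[μ] V)
    (hf : ContinuousOn f V) (hB : ContinuousOn B U) (hle : ∀ x ∈ V, ‖f x‖ ≤ B x / dist x a) :
    LocallyIntegrableOn f U μ := by
  have hbound : LocallyIntegrableOn (fun x => B x * (dist x a)⁻¹) U μ :=
    ((locallyIntegrable_inv_dist hE a).locallyIntegrableOn U).continuousOn_mul hB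
      hU.isLocallyClosed
  refine (locallyIntegrableOn_iff hU.isLocallyClosed).2 fun k hkU hk => ?_
  have hle_restrict : μ.restrict k ≤ μ.restrict V :=
    Measure.restrict_mono_ae (hkU.eventuallyLE.trans hUV)
  refine Integrable.mono' (hbound.integrableOn_compact_subset hkU hk)
    ((hf.aestronglyMeasurable hV).mono_measure hle_restrict) ?_
  filter_upwards [ae_mono hle_restrict (ae_restrict_mem hV)] with x hx using hle x hx

end LocalIntegrability

section RingBounds

variable {a p : ℝ × ℝ}

lemma integral_inv_sq_add_mul_sq_le {d m : ℝ} (hd : 0 < d) (hm : 0 < m) (α β : ℝ) :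
    ∫ t in α..β, (d ^ 2 + m ^ 2 * t ^ 2)⁻¹ ≤ π / m / d := by
  have hpos (t : ℝ) : 0 < d ^ 2 + m ^ 2 * t ^ 2 := by positivity
  have hderiv (t : ℝ) :
      HasDerivAt (fun t => Real.arctan (m * t / d) / (m * d)) (d ^ 2 + m ^ 2 * t ^ 2)⁻¹ t := by
    refine ((((hasDerivAt_id t).const_mul m).div_const d).arctan.div_const (m * d)).congr_deriv ?_
    have := hpos t
    simp only [id]
    field_simp
  rw [intervalIntegral.integral_eq_sub_of_hasDerivAt (fun t _ => hderiv t)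
    ((Continuous.inv₀ (by fun_prop) fun t => (hpos t).ne').intervalIntegrable _ _),
    ← sub_div, div_div]
  gcongr
  linarith [Real.arctan_lt_pi_div_two (m * β / d), Real.neg_pi_div_two_lt_arctan (m * α / d)]

lemma dist_sq_add_le_ringDist_sq (ha : a ∈ Hp) (hp : p ∈ Hp) {t : ℝ} (ht : |t| ≤ π) :
    dist p a ^ 2 + (2 * √(a.1 * p.1) / π) ^ 2 * t ^ 2 ≤ ringDist a p t ^ 2 := by
  have hap : 0 < a.1 * p.1 := mul_pos ha hp
  have hdist : dist p a ^ 2 ≤ (p.1 - a.1) ^ 2 + (p.2 - a.2) ^ 2 := by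
    rw [Prod.dist_eq, Real.dist_eq, Real.dist_eq]
    rcases max_choice |p.1 - a.1| |p.2 - a.2| with h | h <;> rw [h, sq_abs]
    · exact le_add_of_nonneg_right (sq_nonneg _)
    · exact le_add_of_nonneg_left (sq_nonneg _)
  have hcos := mul_le_mul_of_nonneg_left (Real.cos_le_one_sub_mul_cos_sq ht) hap.le
  rw [ringDist_sq_eq_add, div_pow, mul_pow, Real.sq_sqrt hap.le]
  linear_combination hdist + 2 * hcos

lemma continuous_inv_ringDist_sq (ha : a ∈ Hp) (hp : p ∈ Hp \ {a}) :
    Continuous fun t => (ringDist a p t ^ 2)⁻¹ :=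
  Continuous.inv₀ (by fun_prop) fun t => pow_ne_zero 2 (ringDist_ne_zero ha hp t)

lemma integral_inv_ringDist_sq_le (ha : a ∈ Hp) (hp : p ∈ Hp \ {a}) :
    ∫ t in (0:ℝ)..(2 * π), (ringDist a p t ^ 2)⁻¹ ≤ π ^ 2 / (2 * √(a.1 * p.1)) / dist p a := by
  have hm : 0 < 2 * √(a.1 * p.1) / π := by
    have := Real.sqrt_pos.2 (mul_pos ha hp.1)
    positivity
  have hd : 0 < dist p a := dist_pos.2 hp.2
  have hperiodic : Function.Periodic (fun t => (ringDist a p t ^ 2)⁻¹) (2 * π) := fun t => by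
    simp [ringDist]
  have hshift := hperiodic.intervalIntegral_add_eq 0 (-π)
  rw [zero_add, show -π + 2 * π = π by ring] at hshift
  rw [hshift]
  refine le_trans ?_ ((integral_inv_sq_add_mul_sq_le hd hm (-π) π).trans_eq ?_)
  swap
  · rw [div_div_eq_mul_div, sq]
  refine intervalIntegral.integral_mono_on (by linarith [Real.pi_pos])
    ((continuous_inv_ringDist_sq ha hp).intervalIntegrable _ _)
    ((Continuous.inv₀ (by fun_prop) fun t => by positivity).intervalIntegrable _ _) fun t ht => ?_
  have := dist_sq_add_le_ringDist_sq ha hp.1 (abs_le.2 ht)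
  gcongr

lemma abs_integral_div_ringDist_cube_le (ha : a ∈ Hp) (hp : p ∈ Hp \ {a}) {N : ℝ → ℝ}
    (hN : ∀ t, |N t| ≤ ringDist a p t) :
    |∫ t in (0:ℝ)..(2 * π), N t / ringDist a p t ^ 3| ≤ π ^ 2 / (2 * √(a.1 * p.1)) / dist p a := by
  refine le_trans ?_ (integral_inv_ringDist_sq_le ha hp)
  refine intervalIntegral.norm_integral_le_of_norm_le
    (f := fun t => N t / ringDist a p t ^ 3) Real.two_pi_pos.le
    (.of_forall fun t _ => ?_) ((continuous_inv_ringDist_sq ha hp).intervalIntegrable _ _)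
  have hS := ringDist_pos ha hp t
  rw [Real.norm_eq_abs, abs_div, abs_of_pos (pow_pos hS 3), div_le_iff₀ (by positivity)]
  refine (hN t).trans_eq ?_
  field_simp

lemma abs_ringCurrentR_le (ha : a ∈ Hp) (hp : p ∈ Hp \ {a}) :
    |ringCurrentR a p| ≤ a.1 / 2 * (π ^ 2 / (2 * √(a.1 * p.1))) / dist p a := by
  have ha' : 0 < a.1 / 2 := half_pos ha
  rw [ringCurrentR, abs_mul, abs_neg, abs_of_pos ha', mul_div_assoc]
  gcongr
  refine abs_integral_div_ringDist_cube_le ha hp fun t => ?_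
  rw [abs_mul]
  exact (mul_le_of_le_one_left (abs_nonneg _) (Real.abs_cos_le_one t)).trans
    (abs_snd_sub_le_ringDist a p t)

lemma abs_ringCurrentZ_le (ha : a ∈ Hp) (hp : p ∈ Hp \ {a}) :
    |ringCurrentZ a p| ≤ a.1 / 2 * (π ^ 2 / (2 * √(a.1 * p.1))) / dist p a := by
  have ha' : 0 < a.1 / 2 := half_pos ha
  rw [ringCurrentZ, abs_mul, abs_neg, abs_of_pos ha', mul_div_assoc]
  gcongr
  exact abs_integral_div_ringDist_cube_le ha hp (abs_sub_mul_cos_le_ringDist a p)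

lemma abs_integral_le_two_pi_div_dist {f : ℝ → ℝ} (hf : ∀ t, |f t| ≤ 1 / dist p a) :
    |∫ t in (0:ℝ)..(2 * π), f t| ≤ 2 * π / dist p a := by
  refine (intervalIntegral.norm_integral_le_of_norm_le_const (f := f) fun t _ => hf t).trans_eq ?_
  rw [sub_zero, abs_of_pos Real.two_pi_pos, one_div_mul_eq_div]

lemma abs_phaseBranch_le {σ : ℝ} (hσ : σ ^ 2 = 1) (ha : a ∈ Hp) (hp : p ∈ Hp \ {a})
    (hs : 0 ≤ σ * (p.2 - a.2)) : |phaseBranch σ a p| ≤ a.1 / 2 * (2 * π) / dist p a := by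
  have ha' : 0 < a.1 / 2 := half_pos ha
  have hd : 0 < dist p a := dist_pos.2 hp.2
  have hσ' : |σ| = 1 := (abs_eq zero_le_one).2 (sq_eq_one_iff.1 hσ)
  rw [phaseBranch, abs_mul, abs_mul, hσ', one_mul, abs_of_pos ha',
    mul_div_assoc]
  gcongr
  refine abs_integral_le_two_pi_div_dist fun t => ?_
  have hS := ringDist_pos ha hp t
  have hdist : dist p a ≤ σ * (p.2 - a.2) + ringDist a p t :=
    (dist_le_ringDist ha hp.1 t).trans (le_add_of_nonneg_left hs)
  rw [abs_div, abs_of_pos (mul_pos hS (hd.trans_le hdist)), div_mul_eq_div_div]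
  exact div_le_div₀ zero_le_one ((div_le_one hS).2 (abs_sub_mul_cos_le_ringDist a p t)) hd hdist

lemma abs_mul_Avec_le (ha : a ∈ Hp) (hp : p ∈ Hp \ {a}) :
    |p.1 * Avec a p| ≤ p.1 * (a.1 / 2 * (2 * π)) / dist p a := by
  have ha' : 0 < a.1 / 2 := half_pos ha
  have hp' : 0 < p.1 := hp.1
  rw [Avec, abs_mul, abs_mul, abs_of_pos ha', abs_of_pos hp', mul_div_assoc, mul_div_assoc]
  gcongr
  refine abs_integral_le_two_pi_div_dist fun t => ?_
  rw [abs_div, abs_of_nonneg (Real.sqrt_nonneg _)]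
  exact div_le_div₀ zero_le_one (Real.abs_cos_le_one t) (dist_pos.2 hp.2)
    (dist_le_ringDist ha hp.1 t)

end RingBounds

/-! ### Integration by parts across a branch cut -/

section FubiniFTC

variable {α E : Type*} [MeasurableSpace α] {μ : Measure α} [SFinite μ] [NormedAddCommGroup E]
  [NormedSpace ℝ E]

lemma integral_prod_eq_zero_of_hasDerivAt_right {f f' : α × ℝ → E}
    (h : ∀ᵐ x ∂μ, ∀ y, HasDerivAt (fun s => f (x, s)) (f' (x, y)) y)
    (hf' : Integrable f' (μ.prod volume)) (hf : Integrable f (μ.prod volume)) :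
    ∫ p, f' p ∂μ.prod volume = 0 := by
  rw [integral_prod _ hf']
  refine integral_eq_zero_of_ae ?_
  filter_upwards [h, hf'.prod_right_ae, hf.prod_right_ae] with x hx hx' hfx
  exact integral_eq_zero_of_hasDerivAt_of_integrable hx hx' hfx

lemma integral_prod_eq_zero_of_hasDerivAt_left {f f' : ℝ × α → E}
    (h : ∀ᵐ y ∂μ, ∀ x, HasDerivAt (fun s => f (s, y)) (f' (x, y)) x)
    (hf' : Integrable f' (volume.prod μ)) (hf : Integrable f (volume.prod μ)) :
    ∫ p, f' p ∂volume.prod μ = 0 := by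
  rw [← integral_prod_swap]
  exact integral_prod_eq_zero_of_hasDerivAt_right h hf'.swap hf.swap

end FubiniFTC

section CompactSupport

lemma integrable_mul_of_integrableOn_tsupport {X : Type*} [TopologicalSpace X] [MeasurableSpace X]
    [OpensMeasurableSpace X] [T2Space X] {μ : Measure X} {f ψ : X → ℝ}
    (hf : IntegrableOn f (tsupport ψ) μ) (hψ : Continuous ψ) (hc : HasCompactSupport ψ) :
    Integrable (fun x => f x * ψ x) μ :=
  (integrableOn_iff_integrable_of_support_subset
    ((Function.support_mul_subset_right f ψ).trans (subset_tsupport ψ))).1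
    (hf.mul_continuousOn hψ.continuousOn hc)

lemma hasFDerivAt_mul_of_mem_tsupport {E : Type*} [NormedAddCommGroup E] [NormedSpace ℝ E]
    {f ψ : E → ℝ} {f' ψ' : E →L[ℝ] ℝ} {x : E} (hf : x ∈ tsupport ψ → HasFDerivAt f f' x)
    (hψ : HasFDerivAt ψ ψ' x) : HasFDerivAt (fun y => f y * ψ y) (f x • ψ' + ψ x • f') x := by
  by_cases hx : x ∈ tsupport ψ
  · exact (hf hx).mul hψ
  have hzero : ψ =ᶠ[𝓝 x] 0 := notMem_tsupport_iff_eventuallyEq.1 hx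
  have hψ' : ψ' = 0 := hψ.unique ((hasFDerivAt_const 0 x).congr_of_eventuallyEq hzero)
  rw [hψ', hzero.self_of_nhds]
  simp only [smul_zero, Pi.zero_apply, zero_smul, add_zero]
  exact (hasFDerivAt_const 0 x).congr_of_eventuallyEq (hzero.mono fun y hy => by simp [hy])

end CompactSupport

section TestFunctions

variable {φ ψ : ℝ × ℝ → ℝ}

lemma contDiff_pdRr {m n : WithTop ℕ∞} (hφ : ContDiff ℝ n φ) (h : m + 1 ≤ n) :
    ContDiff ℝ m (pdRr φ) := (hφ.fderiv_right h).clm_apply contDiff_const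

lemma contDiff_pdZr {m n : WithTop ℕ∞} (hφ : ContDiff ℝ n φ) (h : m + 1 ≤ n) :
    ContDiff ℝ m (pdZr φ) := (hφ.fderiv_right h).clm_apply contDiff_const

lemma tsupport_pdRr_subset (φ : ℝ × ℝ → ℝ) : tsupport (pdRr φ) ⊆ tsupport φ :=
  tsupport_fderiv_apply_subset ℝ (1, 0)

lemma tsupport_pdZr_subset (φ : ℝ × ℝ → ℝ) : tsupport (pdZr φ) ⊆ tsupport φ :=
  tsupport_fderiv_apply_subset ℝ (0, 1)

lemma hasCompactSupport_pdRr (hc : HasCompactSupport φ) : HasCompactSupport (pdRr φ) :=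
  hc.fderiv_apply ℝ (1, 0)

lemma hasCompactSupport_pdZr (hc : HasCompactSupport φ) : HasCompactSupport (pdZr φ) :=
  hc.fderiv_apply ℝ (0, 1)

lemma pdZr_pdRr_eq_pdRr_pdZr (hφ : ContDiff ℝ 2 φ) : pdZr (pdRr φ) = pdRr (pdZr φ) := by
  ext p
  have hd : DifferentiableAt ℝ (fderiv ℝ φ) p :=
    (hφ.fderiv_right (m := 1) (by norm_num)).differentiable (by norm_num) p
  have happly (v w : ℝ × ℝ) :
      fderiv ℝ (fun q => fderiv ℝ φ q v) p w = fderiv ℝ (fderiv ℝ φ) p w v := by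
    rw [(hd.hasFDerivAt.clm_apply (hasFDerivAt_const v p)).fderiv]
    simp
  have hsymm : IsSymmSndFDerivAt ℝ φ p := hφ.contDiffAt.isSymmSndFDerivAt (by simp)
  exact (happly _ _).trans ((hsymm _ _).trans (happly _ _).symm)

lemma hasDerivAt_slice_fst {f : ℝ × ℝ → ℝ} {L : ℝ × ℝ →L[ℝ] ℝ} {p : ℝ × ℝ}
    (h : HasFDerivAt f L p) : HasDerivAt (fun s => f (s, p.2)) (L (1, 0)) p.1 :=
  h.comp_hasDerivAt (f := fun s => (s, p.2)) p.1
    ((hasDerivAt_id p.1).prodMk (hasDerivAt_const p.1 p.2))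

lemma hasDerivAt_slice_snd {f : ℝ × ℝ → ℝ} {L : ℝ × ℝ →L[ℝ] ℝ} {p : ℝ × ℝ}
    (h : HasFDerivAt f L p) : HasDerivAt (fun s => f (p.1, s)) (L (0, 1)) p.2 :=
  h.comp_hasDerivAt (f := fun s => (p.1, s)) p.2
    ((hasDerivAt_const p.2 p.1).prodMk (hasDerivAt_id p.2))

lemma hasCompactSupport_slice_fst (hc : HasCompactSupport φ) (z : ℝ) :
    HasCompactSupport fun r => φ (r, z) :=
  hc.comp_isClosedEmbedding
    (Function.LeftInverse.isClosedEmbedding (f := Prod.fst) (fun _ => rfl) continuous_fst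
      (by fun_prop))

lemma hasCompactSupport_slice_snd (hc : HasCompactSupport φ) (r : ℝ) :
    HasCompactSupport fun z => φ (r, z) :=
  hc.comp_isClosedEmbedding
    (Function.LeftInverse.isClosedEmbedding (f := Prod.snd) (fun _ => rfl) continuous_snd
      (by fun_prop))

lemma setIntegral_Iic_pdZr_pdRr (hφ : ContDiff ℝ 2 φ) (hc : HasCompactSupport φ) (a : ℝ × ℝ) :
    ∫ p in Set.Iic a, pdZr (pdRr φ) p = φ a := by
  have hR : ContDiff ℝ 1 (pdRr φ) := contDiff_pdRr hφ (by norm_num)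
  have hint : Integrable (pdZr (pdRr φ)) :=
    (contDiff_pdZr (m := 0) hR (by norm_num)).continuous.integrable_of_hasCompactSupport
      (hasCompactSupport_pdZr (hasCompactSupport_pdRr hc))
  have hinner (r : ℝ) : ∫ z in Set.Iic a.2, pdZr (pdRr φ) (r, z) = pdRr φ (r, a.2) := by
    have hderiv : (fun z => pdZr (pdRr φ) (r, z)) = deriv fun z => pdRr φ (r, z) := funext fun z =>
      (hasDerivAt_slice_snd (p := (r, z))
        (hR.differentiable (by norm_num) _).hasFDerivAt).deriv.symm
    rw [hderiv]
    exact HasCompactSupport.integral_Iic_deriv_eq (hR.comp (by fun_prop))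
      (hasCompactSupport_slice_snd (hasCompactSupport_pdRr hc) r) a.2
  have hderiv : (fun r => pdRr φ (r, a.2)) = deriv fun r => φ (r, a.2) := funext fun r =>
    (hasDerivAt_slice_fst (p := (r, a.2))
      (hφ.differentiable (by norm_num) _).hasFDerivAt).deriv.symm
  rw [Set.Iic_prod_eq, Measure.volume_eq_prod, setIntegral_prod _ hint.integrableOn]
  simp only [hinner]
  rw [hderiv]
  exact HasCompactSupport.integral_Iic_deriv_eq ((hφ.of_le (by norm_num)).comp (by fun_prop))
    (hasCompactSupport_slice_fst hc a.2) a.1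

variable {f P Q : ℝ × ℝ → ℝ} {c : ℝ}

lemma integrable_mul_pdZr (hφ : ContDiff ℝ 1 φ) (hc : HasCompactSupport φ)
    (hfi : IntegrableOn f (tsupport φ)) : Integrable fun p => f p * pdZr φ p :=
  integrable_mul_of_integrableOn_tsupport (hfi.mono_set (tsupport_pdZr_subset φ))
    (contDiff_pdZr (m := 0) hφ (by norm_num)).continuous (hasCompactSupport_pdZr hc)

lemma integrable_mul_pdZr_add (hψ : ContDiff ℝ 1 ψ) (hc : HasCompactSupport ψ)
    (hfi : IntegrableOn f (tsupport ψ)) (hQi : IntegrableOn Q (tsupport ψ)) :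
    Integrable fun p => f p * pdZr ψ p + Q p * ψ p :=
  (integrable_mul_pdZr hψ hc hfi).add (integrable_mul_of_integrableOn_tsupport hQi hψ.continuous hc)

lemma integral_mul_pdZr_add_eq_zero (hψ : ContDiff ℝ 1 ψ) (hc : HasCompactSupport ψ)
    (hfi : IntegrableOn f (tsupport ψ)) (hQi : IntegrableOn Q (tsupport ψ))
    (hf : ∀ p ∈ tsupport ψ, p.1 ≠ c → HasFDerivAt f (covector (P p) (Q p)) p) :
    ∫ p, (f p * pdZr ψ p + Q p * ψ p) = 0 := by
  refine integral_prod_eq_zero_of_hasDerivAt_right (f := fun p => f p * ψ p) ?_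
    (integrable_mul_pdZr_add hψ hc hfi hQi)
    (integrable_mul_of_integrableOn_tsupport hfi hψ.continuous hc)
  filter_upwards [Measure.ae_ne volume c] with r hr z
  have hprod := hasDerivAt_slice_snd (hasFDerivAt_mul_of_mem_tsupport
    (fun hp => hf (r, z) hp hr) (hψ.differentiable (by norm_num) (r, z)).hasFDerivAt)
  exact hprod.congr_deriv (by simp [pdZr, mul_comm])

lemma integrable_mul_pdRr (hφ : ContDiff ℝ 1 φ) (hc : HasCompactSupport φ)
    (hfi : IntegrableOn f (tsupport φ)) : Integrable fun p => f p * pdRr φ p :=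
  integrable_mul_of_integrableOn_tsupport (hfi.mono_set (tsupport_pdRr_subset φ))
    (contDiff_pdRr (m := 0) hφ (by norm_num)).continuous (hasCompactSupport_pdRr hc)

lemma integrable_mul_pdRr_add (hψ : ContDiff ℝ 1 ψ) (hc : HasCompactSupport ψ)
    (hfi : IntegrableOn f (tsupport ψ)) (hPi : IntegrableOn P (tsupport ψ)) :
    Integrable fun p => f p * pdRr ψ p + P p * ψ p :=
  (integrable_mul_pdRr hψ hc hfi).add (integrable_mul_of_integrableOn_tsupport hPi hψ.continuous hc)

lemma integral_mul_pdRr_add_eq_zero (hψ : ContDiff ℝ 1 ψ) (hc : HasCompactSupport ψ)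
    (hfi : IntegrableOn f (tsupport ψ)) (hPi : IntegrableOn P (tsupport ψ))
    (hf : ∀ p ∈ tsupport ψ, p.2 ≠ c → HasFDerivAt f (covector (P p) (Q p)) p) :
    ∫ p, (f p * pdRr ψ p + P p * ψ p) = 0 := by
  refine integral_prod_eq_zero_of_hasDerivAt_left (f := fun p => f p * ψ p) ?_
    (integrable_mul_pdRr_add hψ hc hfi hPi)
    (integrable_mul_of_integrableOn_tsupport hfi hψ.continuous hc)
  filter_upwards [Measure.ae_ne volume c] with z hz r
  have hprod := hasDerivAt_slice_fst (hasFDerivAt_mul_of_mem_tsupport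
    (fun hp => hf (r, z) hp hz) (hψ.differentiable (by norm_num) (r, z)).hasFDerivAt)
  exact hprod.congr_deriv (by simp [pdRr, mul_comm])

/- Horizontal lines see `f`, vertical lines see `f` corrected by `κ` on a quadrant; the mismatch
contributes the integral of `κ ∂_z ∂_r φ` over that quadrant. -/
lemma integral_curl_eq_neg_mul_of_quadrant_jump {a : ℝ × ℝ} {κ : ℝ} (hφ : ContDiff ℝ 2 φ)
    (hc : HasCompactSupport φ) (hfi : IntegrableOn f (tsupport φ))
    (hPi : IntegrableOn P (tsupport φ)) (hQi : IntegrableOn Q (tsupport φ))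
    (hf : ∀ p ∈ tsupport φ, p.2 ≠ a.2 → HasFDerivAt f (covector (P p) (Q p)) p)
    (hfκ : ∀ p ∈ tsupport φ, p.1 ≠ a.1 →
      HasFDerivAt (fun q => f q + (Set.Iic a).indicator (fun _ => κ) q)
        (covector (P p) (Q p)) p) :
    ∫ p, (Q p * pdRr φ p - P p * pdZr φ p) = -(κ * φ a) := by
  have hR : ContDiff ℝ 1 (pdRr φ) := contDiff_pdRr hφ (by norm_num)
  have hZ : ContDiff ℝ 1 (pdZr φ) := contDiff_pdZr hφ (by norm_num)
  have hcR := hasCompactSupport_pdRr hc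
  have hcZ := hasCompactSupport_pdZr hc
  have hsR := tsupport_pdRr_subset φ
  have hsZ := tsupport_pdZr_subset φ
  have hκi : IntegrableOn (fun q => f q + (Set.Iic a).indicator (fun _ => κ) q) (tsupport φ) :=
    hfi.add ((integrableOn_const hc.measure_ne_top).indicator measurableSet_Iic)
  have hverti := integrable_mul_pdZr_add hR hcR (hκi.mono_set hsR) (hQi.mono_set hsR)
  have hhori := integrable_mul_pdRr_add hZ hcZ (hfi.mono_set hsZ) (hPi.mono_set hsZ)
  have hvert := integral_mul_pdZr_add_eq_zero hR hcR (hκi.mono_set hsR) (hQi.mono_set hsR)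
    fun p hp => hfκ p (hsR hp)
  have hhor := integral_mul_pdRr_add_eq_zero hZ hcZ (hfi.mono_set hsZ) (hPi.mono_set hsZ)
    fun p hp => hf p (hsZ hp)
  have hmixed : Integrable ((Set.Iic a).indicator fun p => κ * pdZr (pdRr φ) p) :=
    (((contDiff_pdZr (m := 0) hR (by norm_num)).continuous.integrable_of_hasCompactSupport
      (hasCompactSupport_pdZr hcR)).const_mul κ).indicator measurableSet_Iic
  calc ∫ p, (Q p * pdRr φ p - P p * pdZr φ p)
      = ∫ p, ((f p + (Set.Iic a).indicator (fun _ => κ) p) * pdZr (pdRr φ) p + Q p * pdRr φ p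
          - (f p * pdRr (pdZr φ) p + P p * pdZr φ p)
          - (Set.Iic a).indicator (fun p => κ * pdZr (pdRr φ) p) p) := by
        congr 1 with p
        rw [Set.indicator_mul_left, pdZr_pdRr_eq_pdRr_pdZr hφ]
        ring
    _ = -(κ * φ a) := by
        rw [integral_sub (by exact hverti.sub hhori) hmixed, integral_sub hverti hhori, hvert, hhor,
          integral_indicator measurableSet_Iic, integral_const_mul,
          setIntegral_Iic_pdZr_pdRr hφ hc]
        ring

end TestFunctions

/-! ### The glued phase -/

/-- A phase of the one-vortex map, equal on each side of the plane of the ring to the `phaseBranch`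
whose Dirac string points away from that plane; off the vortex its only discontinuities are on the
segment `r < r(a)` of that plane. -/
def vortexPhase (a p : ℝ × ℝ) : ℝ :=
  if a.2 < p.2 then phaseBranch 1 a p else phaseBranch (-1) a p

section VortexPhase

variable {a p : ℝ × ℝ}

lemma vortexPhase_eventuallyEq (hp : p.2 ≠ a.2) :
    ∃ σ : ℝ, σ ^ 2 = 1 ∧ 0 < σ * (p.2 - a.2) ∧ vortexPhase a =ᶠ[𝓝 p] phaseBranch σ a := by
  rcases hp.lt_or_gt with h | h
  · refine ⟨-1, by norm_num, by linarith, ?_⟩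
    filter_upwards [continuous_snd.continuousAt.eventually_lt_const h] with q hq
    exact if_neg hq.not_gt
  · refine ⟨1, by norm_num, by linarith, ?_⟩
    filter_upwards [continuous_snd.continuousAt.eventually_const_lt h] with q hq
    exact if_pos hq

lemma hasFDerivAt_vortexPhase (ha : a ∈ Hp) (hp : p ∈ Hp) (hz : p.2 ≠ a.2) :
    HasFDerivAt (vortexPhase a) (covector (ringCurrentR a p) (ringCurrentZ a p)) p := by
  obtain ⟨σ, hσ, hs, heq⟩ := vortexPhase_eventuallyEq hz
  exact (hasFDerivAt_phaseBranch hσ ha ⟨hp, Or.inr hs⟩).congr_of_eventuallyEq heq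

lemma vortexPhase_add_indicator (ha : a ∈ Hp) (hp : p ∈ Hp) (hr : p.1 ≠ a.1) :
    vortexPhase a p + (Set.Iic a).indicator (fun _ => 2 * π) p = phaseBranch 1 a p := by
  have hjump := phaseBranch_one_sub_phaseBranch_neg_one ha hp hr
  by_cases hz : a.2 < p.2
  · rw [vortexPhase, if_pos hz, Set.indicator_of_notMem fun h => hz.not_ge h.2, add_zero]
  rw [vortexPhase, if_neg hz]
  by_cases hlt : p.1 < a.1
  · rw [if_pos hlt] at hjump
    rw [Set.indicator_of_mem (show p ∈ Set.Iic a from ⟨hlt.le, not_lt.1 hz⟩), ← hjump]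
    ring
  · rw [if_neg hlt] at hjump
    rw [Set.indicator_of_notMem fun h => hlt (lt_of_le_of_ne h.1 hr), add_zero]
    linarith

lemma hasFDerivAt_vortexPhase_add_indicator (ha : a ∈ Hp) (hp : p ∈ Hp) (hr : p.1 ≠ a.1) :
    HasFDerivAt (fun q => vortexPhase a q + (Set.Iic a).indicator (fun _ => 2 * π) q)
      (covector (ringCurrentR a p) (ringCurrentZ a p)) p := by
  refine (hasFDerivAt_phaseBranch (σ := 1) (by norm_num) ha
    ⟨hp, Or.inl hr⟩).congr_of_eventuallyEq ?_
  filter_upwards [isOpen_Hp.mem_nhds hp, continuous_fst.continuousAt.eventually_ne hr] with q hq hqr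
    using vortexPhase_add_indicator ha hq hqr

lemma abs_vortexPhase_le (ha : a ∈ Hp) (hp : p ∈ Hp \ {a}) :
    |vortexPhase a p| ≤ a.1 / 2 * (2 * π) / dist p a := by
  unfold vortexPhase
  split_ifs with h
  · exact abs_phaseBranch_le (by norm_num) ha hp (by linarith)
  · exact abs_phaseBranch_le (by norm_num) ha hp (by linarith)

lemma one_lt_finrank_real_prod : 1 < Module.finrank ℝ (ℝ × ℝ) := by simp

lemma locallyIntegrableOn_Hp_of_abs_le_div_dist {f B : ℝ × ℝ → ℝ}
    (hf : ContinuousOn f (Hp \ {a})) (hB : ContinuousOn B Hp)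
    (hle : ∀ p ∈ Hp \ {a}, |f p| ≤ B p / dist p a) : LocallyIntegrableOn f Hp :=
  locallyIntegrableOn_of_norm_le_div_dist one_lt_finrank_real_prod isOpen_Hp
    (isOpen_Hp_diff_singleton a).measurableSet
    (sdiff_null_ae_eq_self (measure_singleton a)).symm.le hf hB hle

lemma continuousOn_ringCurrent_bound (ha : a ∈ Hp) :
    ContinuousOn (fun p : ℝ × ℝ => a.1 / 2 * (π ^ 2 / (2 * √(a.1 * p.1)))) Hp := by
  refine continuousOn_const.mul (continuousOn_const.div (by fun_prop) fun p (hp : 0 < p.1) => ?_)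
  have ha' : 0 < a.1 := ha
  positivity

lemma locallyIntegrableOn_ringCurrentR (ha : a ∈ Hp) : LocallyIntegrableOn (ringCurrentR a) Hp :=
  locallyIntegrableOn_Hp_of_abs_le_div_dist (contDiffOn_ringCurrentR ha).continuousOn
    (continuousOn_ringCurrent_bound ha) fun _ => abs_ringCurrentR_le ha

lemma locallyIntegrableOn_ringCurrentZ (ha : a ∈ Hp) : LocallyIntegrableOn (ringCurrentZ a) Hp :=
  locallyIntegrableOn_Hp_of_abs_le_div_dist (contDiffOn_ringCurrentZ ha).continuousOn
    (continuousOn_ringCurrent_bound ha) fun _ => abs_ringCurrentZ_le ha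

lemma locallyIntegrableOn_mul_Avec (ha : a ∈ Hp) :
    LocallyIntegrableOn (fun p => p.1 * Avec a p) Hp :=
  locallyIntegrableOn_Hp_of_abs_le_div_dist
    (fun _ hp => (hasFDerivAt_mul_Avec ha hp).continuousAt.continuousWithinAt) (by fun_prop)
    fun _ => abs_mul_Avec_le ha

lemma locallyIntegrableOn_vortexPhase (ha : a ∈ Hp) : LocallyIntegrableOn (vortexPhase a) Hp := by
  refine locallyIntegrableOn_of_norm_le_div_dist one_lt_finrank_real_prod isOpen_Hp
    (V := Hp ∩ {p | p.2 ≠ a.2}) (a := a) (B := fun _ => a.1 / 2 * (2 * π))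
    (isOpen_Hp.inter (isOpen_ne_fun continuous_snd continuous_const)).measurableSet ?_
    (fun p hp => (hasFDerivAt_vortexPhase ha hp.1 hp.2).continuousAt.continuousWithinAt)
    continuousOn_const
    fun p hp => abs_vortexPhase_le ha ⟨hp.1, fun h => hp.2 (congrArg Prod.snd h)⟩
  filter_upwards [Measure.quasiMeasurePreserving_snd.ae (Measure.ae_ne volume a.2)] with p hz hp
  exact ⟨hp, hz⟩

lemma integral_curl_ringCurrent {φ : ℝ × ℝ → ℝ} (ha : a ∈ Hp) (hφ : ContDiff ℝ 2 φ)
    (hc : HasCompactSupport φ) (hs : tsupport φ ⊆ Hp) :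
    ∫ p, (ringCurrentZ a p * pdRr φ p - ringCurrentR a p * pdZr φ p) = -(2 * π * φ a) :=
  integral_curl_eq_neg_mul_of_quadrant_jump hφ hc
    ((locallyIntegrableOn_vortexPhase ha).integrableOn_compact_subset hs hc)
    ((locallyIntegrableOn_ringCurrentR ha).integrableOn_compact_subset hs hc)
    ((locallyIntegrableOn_ringCurrentZ ha).integrableOn_compact_subset hs hc)
    (fun _ hp => hasFDerivAt_vortexPhase ha (hs hp))
    fun _ hp => hasFDerivAt_vortexPhase_add_indicator ha (hs hp)

lemma integrableOn_fst_mul {f : ℝ × ℝ → ℝ} {K : Set (ℝ × ℝ)} (hf : LocallyIntegrableOn f Hp)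
    (hKH : K ⊆ Hp) (hK : IsCompact K) : IntegrableOn (fun p => p.1 * f p) K :=
  (hf.integrableOn_compact_subset hKH hK).continuousOn_mul continuousOn_fst hK

lemma integral_div_ringCurrent {φ : ℝ × ℝ → ℝ} (ha : a ∈ Hp) (hφ : ContDiff ℝ 2 φ)
    (hc : HasCompactSupport φ) (hs : tsupport φ ⊆ Hp) :
    ∫ p, (p.1 * ringCurrentR a p * pdRr φ p + p.1 * ringCurrentZ a p * pdZr φ p) = 0 := by
  have hcurl := integral_curl_eq_neg_mul_of_quadrant_jump (a := a) (κ := 0) hφ hc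
    ((locallyIntegrableOn_mul_Avec ha).integrableOn_compact_subset hs hc)
    (integrableOn_fst_mul (locallyIntegrableOn_ringCurrentZ ha) hs hc).neg
    (integrableOn_fst_mul (locallyIntegrableOn_ringCurrentR ha) hs hc)
    (fun p hp hz => hasFDerivAt_mul_Avec ha ⟨hs hp, fun h => hz (congrArg Prod.snd h)⟩)
    fun p hp hr => by
      simpa using hasFDerivAt_mul_Avec ha ⟨hs hp, fun h => hr (congrArg Prod.fst h)⟩
  simpa [sub_eq_add_neg] using hcurl

variable {ι : Type*} [Fintype ι] {ξ : ι → ℝ × ℝ} {φ : ℝ × ℝ → ℝ}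

lemma integral_curl_sum_ringCurrent (hξ : ∀ i, ξ i ∈ Hp) (hφ : ContDiff ℝ 2 φ)
    (hc : HasCompactSupport φ) (hs : tsupport φ ⊆ Hp) :
    ∫ p, ((∑ i, ringCurrentZ (ξ i) p) * pdRr φ p - (∑ i, ringCurrentR (ξ i) p) * pdZr φ p)
      = -(2 * π * ∑ i, φ (ξ i)) := by
  have hφ' : ContDiff ℝ 1 φ := hφ.of_le (by norm_num)
  have hint (i : ι) : Integrable fun p =>
      ringCurrentZ (ξ i) p * pdRr φ p - ringCurrentR (ξ i) p * pdZr φ p :=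
    (integrable_mul_pdRr hφ' hc
      ((locallyIntegrableOn_ringCurrentZ (hξ i)).integrableOn_compact_subset hs hc)).sub
    (integrable_mul_pdZr hφ' hc
      ((locallyIntegrableOn_ringCurrentR (hξ i)).integrableOn_compact_subset hs hc))
  simp only [Finset.sum_mul, ← Finset.sum_sub_distrib]
  rw [integral_finsetSum _ fun i _ => hint i]
  simp only [integral_curl_ringCurrent (hξ _) hφ hc hs, Finset.sum_neg_distrib, Finset.mul_sum]

lemma integral_div_sum_ringCurrent (hξ : ∀ i, ξ i ∈ Hp) (hφ : ContDiff ℝ 2 φ)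
    (hc : HasCompactSupport φ) (hs : tsupport φ ⊆ Hp) :
    ∫ p, (p.1 * (∑ i, ringCurrentR (ξ i) p) * pdRr φ p
      + p.1 * (∑ i, ringCurrentZ (ξ i) p) * pdZr φ p) = 0 := by
  have hφ' : ContDiff ℝ 1 φ := hφ.of_le (by norm_num)
  have hint (i : ι) : Integrable fun p =>
      p.1 * ringCurrentR (ξ i) p * pdRr φ p + p.1 * ringCurrentZ (ξ i) p * pdZr φ p :=
    (integrable_mul_pdRr hφ' hc
      (integrableOn_fst_mul (locallyIntegrableOn_ringCurrentR (hξ i)) hs hc)).add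
    (integrable_mul_pdZr hφ' hc
      (integrableOn_fst_mul (locallyIntegrableOn_ringCurrentZ (hξ i)) hs hc))
  simp only [Finset.mul_sum, Finset.sum_mul, ← Finset.sum_add_distrib]
  rw [integral_finsetSum _ fun i _ => hint i]
  exact Finset.sum_eq_zero fun i _ => integral_div_ringCurrent (hξ i) hφ hc hs

end VortexPhase

/-! ### Unimodular maps and their currents -/

/-- The differential `i u (P dr + Q dz)` of a unimodular map with value `u` and current `(P, Q)`. -/
def currentDifferential (u : ℂ) (P Q : ℝ) : ℝ × ℝ →L[ℝ] ℂ :=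
  (u * Complex.I) • Complex.ofRealCLM.comp (covector P Q)

@[simp]
lemma currentDifferential_apply (u : ℂ) (P Q : ℝ) (v : ℝ × ℝ) :
    currentDifferential u P Q v = u * Complex.I * (P * v.1 + Q * v.2 : ℝ) := rfl

section UnimodularMaps

open scoped ComplexConjugate

variable {f g u v : ℝ × ℝ → ℂ} {P Q P' Q' : ℝ} {p : ℝ × ℝ}

lemma hasFDerivAt_exp_mul_I {θ : ℝ × ℝ → ℝ} (hθ : HasFDerivAt θ (covector P Q) p) :
    HasFDerivAt (fun q => Complex.exp (θ q * Complex.I))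
      (currentDifferential (Complex.exp (θ p * Complex.I)) P Q) p := by
  refine ((Complex.ofRealCLM.hasFDerivAt.comp p hθ).mul_const Complex.I).cexp.congr_fderiv ?_
  ext <;> simp <;> ring

lemma hasFDerivAt_mul_currentDifferential
    (hf : HasFDerivAt f (currentDifferential (f p) P Q) p)
    (hg : HasFDerivAt g (currentDifferential (g p) P' Q') p) :
    HasFDerivAt (fun q => f q * g q) (currentDifferential (f p * g p) (P + P') (Q + Q')) p := by
  refine (hf.mul hg).congr_fderiv ?_
  ext <;> simp <;> ring

lemma hasFDerivAt_conj_currentDifferential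
    (hf : HasFDerivAt f (currentDifferential (f p) P Q) p) :
    HasFDerivAt (fun q => conj (f q)) (currentDifferential (conj (f p)) (-P) (-Q)) p := by
  refine (Complex.conjCLE.toContinuousLinearMap.hasFDerivAt.comp p hf).congr_fderiv ?_
  ext <;> simp

lemma conj_mul_self_of_norm_eq_one {z : ℂ} (hz : ‖z‖ = 1) : conj z * z = 1 := by
  rw [Complex.conj_mul', hz]; simp

lemma jr_eq_of_hasFDerivAt (hf : HasFDerivAt f (currentDifferential (f p) P Q) p)
    (h1 : ‖f p‖ = 1) : jr f p = P := by
  rw [jr, pdR, hf.fderiv, currentDifferential_apply, ← mul_assoc, ← mul_assoc,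
    conj_mul_self_of_norm_eq_one h1]
  simp

lemma jz_eq_of_hasFDerivAt (hf : HasFDerivAt f (currentDifferential (f p) P Q) p)
    (h1 : ‖f p‖ = 1) : jz f p = Q := by
  rw [jz, pdZ, hf.fderiv, currentDifferential_apply, ← mul_assoc, ← mul_assoc,
    conj_mul_self_of_norm_eq_one h1]
  simp

lemma re_conj_mul_eq_zero_of_hasFDerivAt {E : Type*} [NormedAddCommGroup E] [NormedSpace ℝ E]
    {w : E → ℂ} {L : E →L[ℝ] ℂ} {x : E} (hw : HasFDerivAt w L x) (h1 : ∀ᶠ y in 𝓝 x, ‖w y‖ = 1)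
    (y : E) : (conj (w x) * L y).re = 0 := by
  have hconst : HasFDerivAt (fun y => ‖w y‖ ^ 2) (0 : E →L[ℝ] ℝ) x :=
    (hasFDerivAt_const 1 x).congr_of_eventuallyEq (h1.mono fun y hy => by simp [hy])
  have hzero : (2 • (innerSL ℝ (w x)).comp L) y = 0 :=
    DFunLike.congr_fun (hw.norm_sq.unique hconst) y
  rwa [two_smul, ← two_smul ℝ, smul_apply, smul_eq_zero_iff_right two_ne_zero,
    ContinuousLinearMap.comp_apply, innerSL_apply_apply, Complex.inner, mul_comm] at hzero

lemma hasFDerivAt_currentDifferential_of_norm_eq_one (hd : DifferentiableAt ℝ v p)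
    (h1 : ∀ᶠ q in 𝓝 p, ‖v q‖ = 1) :
    HasFDerivAt v (currentDifferential (v p) (jr v p) (jz v p)) p := by
  have htangent (w : ℝ × ℝ) :
      fderiv ℝ v p w = v p * Complex.I * (conj (v p) * fderiv ℝ v p w).im := by
    have him : conj (v p) * fderiv ℝ v p w = (conj (v p) * fderiv ℝ v p w).im * Complex.I := by
      apply Complex.ext
      · simpa using re_conj_mul_eq_zero_of_hasFDerivAt hd.hasFDerivAt h1 w
      · simp
    linear_combination v p * him
      - fderiv ℝ v p w * conj_mul_self_of_norm_eq_one h1.self_of_nhds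
  refine hd.hasFDerivAt.congr_fderiv (ContinuousLinearMap.prod_ext ?_ ?_)
  · ext
    simpa [jr, pdR] using htangent (1, 0)
  · ext
    simpa [jz, pdZ] using htangent (0, 1)

lemma norm_currentDifferential_le {z : ℂ} (hz : ‖z‖ = 1) (P Q : ℝ) :
    ‖currentDifferential z P Q‖ ≤ |P| + |Q| := by
  refine ContinuousLinearMap.opNorm_le_bound _ (by positivity) fun w => ?_
  rw [currentDifferential_apply, norm_mul, norm_mul, hz, Complex.norm_I, one_mul, one_mul,
    Complex.norm_real, Real.norm_eq_abs]
  calc |P * w.1 + Q * w.2| ≤ |P| * |w.1| + |Q| * |w.2| := by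
        simpa only [abs_mul] using abs_add_le (P * w.1) (Q * w.2)
    _ ≤ |P| * ‖w‖ + |Q| * ‖w‖ := by gcongr <;> [exact norm_fst_le w; exact norm_snd_le w]
    _ = (|P| + |Q|) * ‖w‖ := by ring

lemma exists_eq_const_mul_of_current_eq {U : Set (ℝ × ℝ)} (hU : IsOpen U) (hU' : IsPreconnected U)
    (hu : DifferentiableOn ℝ u U) (hv : DifferentiableOn ℝ v U)
    (hu1 : ∀ p ∈ U, ‖u p‖ = 1) (hv1 : ∀ p ∈ U, ‖v p‖ = 1)
    (hr : ∀ p ∈ U, jr v p = jr u p) (hz : ∀ p ∈ U, jz v p = jz u p) :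
    ∃ c : ℂ, ‖c‖ = 1 ∧ ∀ p ∈ U, v p = c * u p := by
  have hunim {w : ℝ × ℝ → ℂ} (hw : DifferentiableOn ℝ w U) (hw1 : ∀ p ∈ U, ‖w p‖ = 1) {p : ℝ × ℝ}
      (hp : p ∈ U) : HasFDerivAt w (currentDifferential (w p) (jr w p) (jz w p)) p :=
    hasFDerivAt_currentDifferential_of_norm_eq_one (hw.differentiableAt (hU.mem_nhds hp))
      (mem_of_superset (hU.mem_nhds hp) hw1)
  have hquot : ∀ p ∈ U, HasFDerivAt (fun q => v q * conj (u q)) (0 : ℝ × ℝ →L[ℝ] ℂ) p := by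
    intro p hp
    refine (hasFDerivAt_mul_currentDifferential (hunim hv hv1 hp)
      (hasFDerivAt_conj_currentDifferential (hunim hu hu1 hp))).congr_fderiv ?_
    ext <;> simp [hr p hp, hz p hp]
  rcases U.eq_empty_or_nonempty with rfl | ⟨p₀, hp₀⟩
  · exact ⟨1, by simp, by simp⟩
  refine ⟨v p₀ * conj (u p₀), by simp [hu1 p₀ hp₀, hv1 p₀ hp₀], fun p hp => ?_⟩
  rw [← hU.is_const_of_fderiv_eq_zero (𝕜 := ℝ) hU'
    (fun q hq => (hquot q hq).differentiableAt.differentiableWithinAt)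
    (fun q hq => (hquot q hq).fderiv) hp hp₀, mul_assoc,
    conj_mul_self_of_norm_eq_one (hu1 p hp), mul_one]

end UnimodularMaps

lemma isPreconnected_Hp_diff_of_countable {S : Set (ℝ × ℝ)} (hS : S.Countable) :
    IsPreconnected (Hp \ S) := by
  have hinj : Function.Injective (Prod.map Real.exp id : ℝ × ℝ → ℝ × ℝ) :=
    Real.exp_injective.prodMap Function.injective_id
  have hconn := ((hS.preimage_of_injOn hinj.injOn).isConnected_compl_of_one_lt_rank
    (by rw [rank_prod', CommSemiring.rank_self]; norm_num)).isPreconnected.image _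
    (Real.continuous_exp.prodMap continuous_id).continuousOn
  have hHp : Set.range (Prod.map Real.exp id : ℝ × ℝ → ℝ × ℝ) = Hp := by
    rw [Set.range_prodMap, Real.range_exp, Set.range_id]
    ext
    simp [Hp]
  rwa [Set.preimage_compl.symm, Set.image_preimage_eq_inter_range, hHp, Set.inter_comm] at hconn

/-! ### The multi-vortex map -/

/-- The unimodular map on the half-plane whose only singularity is a vortex of degree one at `a`. -/
def vortexMap (a p : ℝ × ℝ) : ℂ := Complex.exp (vortexPhase a p * Complex.I)

section VortexMap

variable {a p : ℝ × ℝ} {σ : ℝ}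

lemma norm_vortexMap (a p : ℝ × ℝ) : ‖vortexMap a p‖ = 1 := Complex.norm_exp_ofReal_mul_I _

lemma exp_phaseBranch_one_eq_exp_phaseBranch_neg_one (ha : a ∈ Hp) (hp : p ∈ Hp)
    (hr : p.1 ≠ a.1) :
    Complex.exp (phaseBranch 1 a p * Complex.I) =
      Complex.exp (phaseBranch (-1) a p * Complex.I) := by
  have hjump := phaseBranch_one_sub_phaseBranch_neg_one ha hp hr
  split_ifs at hjump with h
  · rw [sub_eq_iff_eq_add'.1 hjump]
    push_cast
    rw [add_mul]
    exact Complex.exp_periodic _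
  · rw [sub_eq_zero.1 hjump]

lemma vortexMap_eq_exp_phaseBranch (hσ : σ ^ 2 = 1) (ha : a ∈ Hp) (hp : p ∈ phaseDomain σ a) :
    vortexMap a p = Complex.exp (phaseBranch σ a p * Complex.I) := by
  have hsides : p.1 ≠ a.1 → Complex.exp (phaseBranch 1 a p * Complex.I) =
      Complex.exp (phaseBranch (-1) a p * Complex.I) :=
    exp_phaseBranch_one_eq_exp_phaseBranch_neg_one ha hp.1
  rcases sq_eq_one_iff.1 hσ with rfl | rfl <;> rw [vortexMap, vortexPhase] <;>
    split_ifs with hz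
  · rfl
  · exact (hsides (hp.2.resolve_right (by linarith))).symm
  · exact hsides (hp.2.resolve_right (by linarith))
  · rfl

lemma exists_mem_phaseDomain (hp : p ∈ Hp \ {a}) : ∃ σ : ℝ, σ ^ 2 = 1 ∧ p ∈ phaseDomain σ a := by
  by_cases hr : p.1 = a.1
  · have hz : p.2 - a.2 ≠ 0 := sub_ne_zero.2 fun h => hp.2 (Prod.ext hr h)
    rcases hz.lt_or_gt with h | h
    · exact ⟨-1, by norm_num, hp.1, Or.inr (by linarith)⟩
    · exact ⟨1, by norm_num, hp.1, Or.inr (by linarith)⟩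
  · exact ⟨1, by norm_num, hp.1, Or.inl hr⟩

lemma vortexMap_eventuallyEq (hσ : σ ^ 2 = 1) (ha : a ∈ Hp) (hp : p ∈ phaseDomain σ a) :
    vortexMap a =ᶠ[𝓝 p] fun q => Complex.exp (phaseBranch σ a q * Complex.I) :=
  mem_of_superset ((isOpen_phaseDomain σ a).mem_nhds hp) fun _ hq =>
    vortexMap_eq_exp_phaseBranch hσ ha hq

lemma contDiffOn_vortexMap (ha : a ∈ Hp) :
    ContDiffOn ℝ (⊤ : ℕ∞) (vortexMap a) (Hp \ {a}) := by
  intro p hp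
  obtain ⟨σ, hσ, hpσ⟩ := exists_mem_phaseDomain hp
  have hphase := (contDiffOn_phaseBranch hσ ha).contDiffAt ((isOpen_phaseDomain σ a).mem_nhds hpσ)
  exact (((Complex.ofRealCLM.contDiff.contDiffAt.comp p hphase).mul
    contDiffAt_const).cexp.congr_of_eventuallyEq
      (vortexMap_eventuallyEq hσ ha hpσ)).contDiffWithinAt

lemma hasFDerivAt_vortexMap (ha : a ∈ Hp) (hp : p ∈ Hp \ {a}) :
    HasFDerivAt (vortexMap a)
      (currentDifferential (vortexMap a p) (ringCurrentR a p) (ringCurrentZ a p)) p := by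
  obtain ⟨σ, hσ, hpσ⟩ := exists_mem_phaseDomain hp
  rw [vortexMap_eq_exp_phaseBranch hσ ha hpσ]
  exact (hasFDerivAt_exp_mul_I (hasFDerivAt_phaseBranch hσ ha hpσ)).congr_of_eventuallyEq
    (vortexMap_eventuallyEq hσ ha hpσ)

end VortexMap

/-- The product of the one-vortex maps of a finite family of points, a repeated point giving a
vortex of higher degree. -/
def multivortexMap {ι : Type*} [Fintype ι] (ξ : ι → ℝ × ℝ) (p : ℝ × ℝ) : ℂ :=
  ∏ i, vortexMap (ξ i) p

lemma Hp_diff_range_subset {ι : Type*} (ξ : ι → ℝ × ℝ) (i : ι) :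
    Hp \ Set.range ξ ⊆ Hp \ {ξ i} :=
  Set.sdiff_subset_sdiff_right (Set.singleton_subset_iff.2 ⟨i, rfl⟩)

lemma isOpen_Hp_diff_range {ι : Type*} [Finite ι] (ξ : ι → ℝ × ℝ) :
    IsOpen (Hp \ Set.range ξ) :=
  isOpen_Hp.sdiff (Set.finite_range ξ).isClosed

lemma setIntegral_Hp_mul_pdRr_add_mul_pdZr_congr {φ P Q P' Q' : ℝ × ℝ → ℝ} {S : Set (ℝ × ℝ)}
    (hs : tsupport φ ⊆ Hp) (hS : S.Countable)
    (hP : ∀ p ∈ Hp \ S, P p = P' p) (hQ : ∀ p ∈ Hp \ S, Q p = Q' p) :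
    ∫ p in Hp, (P p * pdRr φ p + Q p * pdZr φ p) = ∫ p, (P' p * pdRr φ p + Q' p * pdZr φ p) := by
  have hoff {p : ℝ × ℝ} (hp : p ∉ Hp) : pdRr φ p = 0 ∧ pdZr φ p = 0 :=
    ⟨image_eq_zero_of_notMem_tsupport fun h => hp (hs (tsupport_pdRr_subset φ h)),
      image_eq_zero_of_notMem_tsupport fun h => hp (hs (tsupport_pdZr_subset φ h))⟩
  rw [setIntegral_eq_integral_of_forall_compl_eq_zero fun p hp => by simp [hoff hp]]
  refine integral_congr_ae ?_
  filter_upwards [hS.ae_notMem volume] with p hp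
  by_cases hH : p ∈ Hp
  · rw [hP p ⟨hH, hp⟩, hQ p ⟨hH, hp⟩]
  · simp [hoff hH]

section MultivortexMap

variable {ι : Type*} [Fintype ι] {ξ : ι → ℝ × ℝ} {p : ℝ × ℝ} {φ : ℝ × ℝ → ℝ}

lemma norm_multivortexMap (ξ : ι → ℝ × ℝ) (p : ℝ × ℝ) : ‖multivortexMap ξ p‖ = 1 := by
  simp [multivortexMap, norm_prod, norm_vortexMap]

lemma contDiffOn_multivortexMap (hξ : ∀ i, ξ i ∈ Hp) :
    ContDiffOn ℝ (⊤ : ℕ∞) (multivortexMap ξ) (Hp \ Set.range ξ) :=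
  contDiffOn_prod fun i _ => (contDiffOn_vortexMap (hξ i)).mono (Hp_diff_range_subset ξ i)

lemma hasFDerivAt_multivortexMap (hξ : ∀ i, ξ i ∈ Hp) (hp : p ∈ Hp \ Set.range ξ) :
    HasFDerivAt (multivortexMap ξ) (currentDifferential (multivortexMap ξ p)
      (∑ i, ringCurrentR (ξ i) p) (∑ i, ringCurrentZ (ξ i) p)) p := by
  classical
  unfold multivortexMap
  induction (Finset.univ : Finset ι) using Finset.induction_on with
  | empty =>
    simp only [Finset.prod_empty, Finset.sum_empty]
    exact (hasFDerivAt_const (1 : ℂ) p).congr_fderiv (by ext <;> simp)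
  | insert i s hi ih =>
    simp only [Finset.prod_insert hi, Finset.sum_insert hi]
    exact hasFDerivAt_mul_currentDifferential
      (hasFDerivAt_vortexMap (hξ i) (Hp_diff_range_subset ξ i hp)) ih

lemma jr_multivortexMap (hξ : ∀ i, ξ i ∈ Hp) (hp : p ∈ Hp \ Set.range ξ) :
    jr (multivortexMap ξ) p = ∑ i, ringCurrentR (ξ i) p :=
  jr_eq_of_hasFDerivAt (hasFDerivAt_multivortexMap hξ hp) (norm_multivortexMap ξ p)

lemma jz_multivortexMap (hξ : ∀ i, ξ i ∈ Hp) (hp : p ∈ Hp \ Set.range ξ) :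
    jz (multivortexMap ξ) p = ∑ i, ringCurrentZ (ξ i) p :=
  jz_eq_of_hasFDerivAt (hasFDerivAt_multivortexMap hξ hp) (norm_multivortexMap ξ p)

lemma locallyIntegrableOn_norm_fderiv_multivortexMap (hξ : ∀ i, ξ i ∈ Hp) :
    LocallyIntegrableOn (fun p => ‖fderiv ℝ (multivortexMap ξ) p‖) Hp := by
  rw [locallyIntegrableOn_iff isOpen_Hp.isLocallyClosed]
  intro K hKH hK
  have hbound : IntegrableOn
      (fun p => ∑ i, (|ringCurrentR (ξ i) p| + |ringCurrentZ (ξ i) p|)) K :=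
    integrable_finsetSum _ fun i _ =>
      ((locallyIntegrableOn_ringCurrentR (hξ i)).integrableOn_compact_subset hKH hK).abs.add
        ((locallyIntegrableOn_ringCurrentZ (hξ i)).integrableOn_compact_subset hKH hK).abs
  refine Integrable.mono' hbound (measurable_fderiv ℝ _).norm.aestronglyMeasurable ?_
  filter_upwards [ae_restrict_mem hK.measurableSet,
    ae_restrict_of_ae ((Set.finite_range ξ).countable.ae_notMem volume)] with p hpK hp
  rw [(hasFDerivAt_multivortexMap hξ ⟨hKH hpK, hp⟩).fderiv, norm_norm, Finset.sum_add_distrib]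
  exact (norm_currentDifferential_le (norm_multivortexMap ξ p) _ _).trans <|
    add_le_add (Finset.abs_sum_le_sum_abs _ _) (Finset.abs_sum_le_sum_abs _ _)

lemma integral_div_multivortexMap (hξ : ∀ i, ξ i ∈ Hp) (hφ : ContDiff ℝ 2 φ)
    (hc : HasCompactSupport φ) (hs : tsupport φ ⊆ Hp) :
    ∫ p in Hp, (p.1 * jr (multivortexMap ξ) p * pdRr φ p +
      p.1 * jz (multivortexMap ξ) p * pdZr φ p) = 0 :=
  (setIntegral_Hp_mul_pdRr_add_mul_pdZr_congr hs (Set.finite_range ξ).countable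
    (fun p hp => by rw [jr_multivortexMap hξ hp]) fun p hp => by
      rw [jz_multivortexMap hξ hp]).trans (integral_div_sum_ringCurrent hξ hφ hc hs)

lemma integral_curl_multivortexMap (hξ : ∀ i, ξ i ∈ Hp) (hφ : ContDiff ℝ 2 φ)
    (hc : HasCompactSupport φ) (hs : tsupport φ ⊆ Hp) :
    ∫ p in Hp, (jz (multivortexMap ξ) p * pdRr φ p - jr (multivortexMap ξ) p * pdZr φ p) =
      -(2 * π * ∑ i, φ (ξ i)) := by
  rw [← integral_curl_sum_ringCurrent hξ hφ hc hs]
  simp only [sub_eq_add_neg, ← neg_mul]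
  exact setIntegral_Hp_mul_pdRr_add_mul_pdZr_congr hs (Set.finite_range ξ).countable
    (fun p hp => jz_multivortexMap hξ hp) fun p hp => by rw [jr_multivortexMap hξ hp]

end MultivortexMap

/-! ### Existence and uniqueness -/

/-- The class of maps of the theorem: smooth with values in the unit circle off the vortices, with
locally integrable gradient on `Hp`, and with current prescribed by the stream function
`rPsiStar a`. At the vortices themselves the value is only required to have modulus one. -/
def IsSingularMultivortexMap {n : ℕ} (a : Fin n → ℝ × ℝ) (u : ℝ × ℝ → ℂ) : Prop :=
  ContDiffOn ℝ (⊤ : ℕ∞) u (Hp \ Set.range a) ∧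
    (∀ p ∈ Hp, ‖u p‖ = 1) ∧
    LocallyIntegrableOn (fun p => ‖fderiv ℝ u p‖) Hp volume ∧
    ∀ p ∈ Hp \ Set.range a,
      p.1 * jr u p = pdZr (rPsiStar a) p ∧ p.1 * jz u p = -pdRr (rPsiStar a) p

section Existence

variable {n : ℕ} {a : Fin n → ℝ × ℝ} {u v : ℝ × ℝ → ℂ} {p : ℝ × ℝ}

lemma hasFDerivAt_rPsiStar (ha : ∀ i, a i ∈ Hp) (hp : p ∈ Hp \ Set.range a) :
    HasFDerivAt (rPsiStar a) (covector (-(p.1 * ∑ i, ringCurrentZ (a i) p))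
      (p.1 * ∑ i, ringCurrentR (a i) p)) p := by
  have hsum := HasFDerivAt.fun_sum (u := Finset.univ) fun i (_ : i ∈ Finset.univ) =>
    hasFDerivAt_mul_Avec (ha i) (Hp_diff_range_subset a i hp)
  simp only [← Finset.mul_sum] at hsum
  refine hsum.congr_fderiv ?_
  ext <;> simp [Finset.mul_sum]

lemma isSingularMultivortexMap_multivortexMap (ha : ∀ i, a i ∈ Hp) :
    IsSingularMultivortexMap a (multivortexMap a) := by
  refine ⟨contDiffOn_multivortexMap ha, fun p _ => norm_multivortexMap a p,
    locallyIntegrableOn_norm_fderiv_multivortexMap ha, fun p hp => ?_⟩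
  rw [pdZr, pdRr, (hasFDerivAt_rPsiStar ha hp).fderiv, jr_multivortexMap ha hp,
    jz_multivortexMap ha hp]
  constructor <;> simp

lemma IsSingularMultivortexMap.exists_eq_const_mul (hu : IsSingularMultivortexMap a u)
    (hv : IsSingularMultivortexMap a v) :
    ∃ c : ℂ, ‖c‖ = 1 ∧ ∀ p ∈ Hp \ Set.range a, v p = c * u p := by
  obtain ⟨husmooth, hu1, -, hucur⟩ := hu
  obtain ⟨hvsmooth, hv1, -, hvcur⟩ := hv
  have hr {p : ℝ × ℝ} (hp : p ∈ Hp \ Set.range a) : p.1 ≠ 0 := ne_of_gt hp.1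
  exact exists_eq_const_mul_of_current_eq (isOpen_Hp_diff_range a)
    (isPreconnected_Hp_diff_of_countable (Set.finite_range a).countable)
    (husmooth.differentiableOn (by simp)) (hvsmooth.differentiableOn (by simp))
    (fun p hp => hu1 p hp.1) (fun p hp => hv1 p hp.1)
    (fun p hp => mul_left_cancel₀ (hr hp) ((hvcur p hp).1.trans (hucur p hp).1.symm))
    fun p hp => mul_left_cancel₀ (hr hp) ((hvcur p hp).2.trans (hucur p hp).2.symm)

end Existence

theorem singular_multivortex_map_general {n : ℕ} {a : Fin n → ℝ × ℝ} (ha : ∀ i, a i ∈ Hp) :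
    ∃ u : ℝ × ℝ → ℂ, IsSingularMultivortexMap a u ∧
      (∀ φ : ℝ × ℝ → ℝ, ContDiff ℝ (⊤ : ℕ∞) φ → HasCompactSupport φ → tsupport φ ⊆ Hp →
        (∫ p in Hp, (p.1 * jr u p * pdRr φ p + p.1 * jz u p * pdZr φ p)) = 0 ∧
        -(∫ p in Hp, (jz u p * pdRr φ p - jr u p * pdZr φ p)) = 2 * π * ∑ i, φ (a i)) ∧
      ∀ v : ℝ × ℝ → ℂ, IsSingularMultivortexMap a v →
        ∃ c : ℂ, ‖c‖ = 1 ∧ ∀ p ∈ Hp \ Set.range a, v p = c * u p := by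
  have hu := isSingularMultivortexMap_multivortexMap ha
  refine ⟨multivortexMap a, hu, fun φ hφ hc hs => ?_, fun v hv => hu.exists_eq_const_mul hv⟩
  have hφ2 : ContDiff ℝ 2 φ := contDiff_infty.1 hφ 2
  refine ⟨integral_div_multivortexMap ha hφ2 hc hs, ?_⟩
  rw [integral_curl_multivortexMap ha hφ2 hc hs, neg_neg]

/-- **Existence and uniqueness of the singular unimodular multi-vortex map**,
together with its distributional identities. -/
theorem singular_multivortex_map (n : ℕ) (hn : 1 ≤ n) (a : Fin n → ℝ × ℝ)
    (ha : ∀ i, a i ∈ Hp) (hinj : Function.Injective a) :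
    ∃ u : ℝ × ℝ → ℂ,
      (ContDiffOn ℝ (⊤ : ℕ∞) u (Hp \ Set.range a) ∧
        (∀ p ∈ Hp, ‖u p‖ = 1) ∧
        LocallyIntegrableOn (fun p => ‖fderiv ℝ u p‖) Hp volume ∧
        ∀ p ∈ Hp \ Set.range a,
          p.1 * jr u p = pdZr (rPsiStar a) p ∧ p.1 * jz u p = -pdRr (rPsiStar a) p) ∧
      (∀ φ : ℝ × ℝ → ℝ, ContDiff ℝ (⊤ : ℕ∞) φ → HasCompactSupport φ → tsupport φ ⊆ Hp →
        (∫ p in Hp, (p.1 * jr u p * pdRr φ p + p.1 * jz u p * pdZr φ p)) = 0 ∧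
        -(∫ p in Hp, (jz u p * pdRr φ p - jr u p * pdZr φ p)) = 2 * π * ∑ i, φ (a i)) ∧
      ∀ v : ℝ × ℝ → ℂ,
        (ContDiffOn ℝ (⊤ : ℕ∞) v (Hp \ Set.range a) ∧
          (∀ p ∈ Hp, ‖v p‖ = 1) ∧
          LocallyIntegrableOn (fun p => ‖fderiv ℝ v p‖) Hp volume ∧
          ∀ p ∈ Hp \ Set.range a,
            p.1 * jr v p = pdZr (rPsiStar a) p ∧ p.1 * jz v p = -pdRr (rPsiStar a) p) →
        ∃ c : ℂ, ‖c‖ = 1 ∧ ∀ p ∈ Hp \ Set.range a, v p = c * u p :=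
  singular_multivortex_map_general ha

end
end
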